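/- arXiv:2601.03433 — 11 statements merged into one kernel-verified Lean document; each statement's English description precedes it below -/
import Mathlib

section
/- Let G be a finite simple graph on n ≥ 1 vertices with m edges. Then ∑_{uv ∈ E(G)} d_u d_v ≥ 4m³/n², where the sum runs over the unordered edges uv of G. Moreover, equality holds if and only if G is regular. -/
open Finset SimpleGraph
open scoped Classical

/-- The sum of `d_u * d_v` over the (unordered) edges `uv` of `G`, as a real number. -/
noncomputable def edgeDegSum {n : ℕ} (G : SimpleGraph (Fin n)) : ℝ :=
  ∑ e ∈ G.edgeFinset,
    Sym2.lift ⟨fun u v => (G.degree u : ℝ) * (G.degree v : ℝ),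
      fun u v => mul_comm _ _⟩ e

lemma edge_sum_aux {n : ℕ} (G : SimpleGraph (Fin n)) (f : Fin n → ℝ) :
    ∑ e ∈ G.edgeFinset, Sym2.lift ⟨fun u v => f u + f v, fun u v => add_comm _ _⟩ e
      = ∑ v, (G.degree v : ℝ) * f v := by
  have h1 : ∀ e ∈ G.edgeFinset,
      Sym2.lift ⟨fun u v => f u + f v, fun u v => add_comm _ _⟩ e
        = ∑ w, if w ∈ e then f w else 0 := by
    intro e he
    induction e using Sym2.ind with
    | _ u v =>
      have huv : u ≠ v := (G.mem_edgeFinset.1 he : G.Adj u v).ne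
      rw [Sym2.lift_mk, ← Finset.sum_filter]
      have : (Finset.univ.filter fun w => w ∈ s(u, v)) = {u, v} := by
        ext w; simp
      rw [this, Finset.sum_pair huv]
  rw [Finset.sum_congr rfl h1, Finset.sum_comm]
  refine Finset.sum_congr rfl fun w _ => ?_
  rw [← Finset.sum_filter, Finset.sum_const, nsmul_eq_mul]
  congr 2
  rw [← G.card_incidenceFinset_eq_degree w, G.incidenceFinset_eq_filter]

lemma gap_nonneg {d a : ℝ} (hd : 0 ≤ d) (ha : 0 < a) :
    0 ≤ d * Real.log (d / a) - (d - a) ∧ (d * Real.log (d / a) - (d - a) = 0 → d = a) := by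
  rcases hd.eq_or_lt with rfl | hd
  · simp only [zero_mul]
    exact ⟨by linarith, fun h => by linarith⟩
  have hx : 0 < a / d := by positivity
  have hl : Real.log (d / a) = - Real.log (a / d) := by
    rw [← Real.log_inv, inv_div]
  have hda : d * (a / d) = a := by field_simp
  rw [hl]
  constructor
  · nlinarith [Real.log_le_sub_one_of_pos hx]
  · intro h
    by_contra hne
    have : a / d ≠ 1 := fun h1 => hne (by rw [h1] at hda; linarith)
    nlinarith [Real.log_lt_sub_one_of_pos hx this]

lemma edge_lower {n : ℕ} (G : SimpleGraph (Fin n)) {a : ℝ} (ha : 0 < a) :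
    a ^ 2 * (G.edgeFinset.card + ∑ v, (G.degree v : ℝ) * Real.log (G.degree v / a))
      ≤ edgeDegSum G := by
  rw [← edge_sum_aux G (fun v => Real.log (G.degree v / a)), Finset.card_eq_sum_ones,
    Nat.cast_sum, ← Finset.sum_add_distrib, Finset.mul_sum]
  unfold edgeDegSum
  refine Finset.sum_le_sum fun e he => ?_
  induction e using Sym2.ind with
  | _ u v =>
    have huv : G.Adj u v := G.mem_edgeFinset.1 he
    simp only [Sym2.lift_mk, Nat.cast_one]
    have hu : (0 : ℝ) < G.degree u := by
      exact_mod_cast (G.degree_pos_iff_exists_adj u).2 ⟨v, huv⟩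
    have hv : (0 : ℝ) < G.degree v := by
      exact_mod_cast (G.degree_pos_iff_exists_adj v).2 ⟨u, huv.symm⟩
    have hu' : (0 : ℝ) < G.degree u / a := by positivity
    have hv' : (0 : ℝ) < G.degree v / a := by positivity
    rw [← Real.log_mul hu'.ne' hv'.ne']
    have h := Real.log_le_sub_one_of_pos (mul_pos hu' hv')
    calc _ ≤ a ^ 2 * ((G.degree u : ℝ) / a * (G.degree v / a)) := by
          gcongr; linarith
      _ = _ := by field_simp

/-- **Nikiforov's inequality.**  For a graph `G` on `n ≥ 1` vertices with `m` edges,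
`∑_{uv ∈ E} d_u d_v ≥ 4 m³ / n²`, with equality iff `G` is regular. -/
theorem stmt_0 (n : ℕ) (hn : 1 ≤ n) (G : SimpleGraph (Fin n))
    (m : ℕ) (hm : G.edgeFinset.card = m) :
    4 * (m : ℝ) ^ 3 / (n : ℝ) ^ 2 ≤ edgeDegSum G ∧
    (edgeDegSum G = 4 * (m : ℝ) ^ 3 / (n : ℝ) ^ 2 ↔ ∃ d, G.IsRegularOfDegree d) := by
  have hn0 : (0 : ℝ) < n := by exact_mod_cast hn
  have hsum : ∑ v, (G.degree v : ℝ) = 2 * m := by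
    have := G.sum_degrees_eq_twice_card_edges
    rw [hm] at this
    exact_mod_cast this
  have hreg : (∃ d, G.IsRegularOfDegree d) → edgeDegSum G = 4 * (m : ℝ) ^ 3 / (n : ℝ) ^ 2 := by
    rintro ⟨d, hd⟩
    have hS : edgeDegSum G = m * (d : ℝ) ^ 2 := by
      unfold edgeDegSum
      rw [Finset.sum_congr rfl (g := fun _ => (d : ℝ) ^ 2), Finset.sum_const, hm, nsmul_eq_mul]
      intro e _
      induction e using Sym2.ind with
      | _ u v => rw [Sym2.lift_mk]; simp only [hd.degree_eq]; ring
    have hnd : (n : ℝ) * d = 2 * m := by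
      rw [← hsum]; simp [hd.degree_eq]
    rw [hS, eq_div_iff (by positivity)]
    calc (m : ℝ) * d ^ 2 * n ^ 2 = m * (n * d) ^ 2 := by ring
      _ = _ := by rw [hnd]; ring
  rcases Nat.eq_zero_or_pos m with h0 | hmpos
  · have hr : ∃ d, G.IsRegularOfDegree d := by
      refine ⟨0, fun v => ?_⟩
      rw [h0] at hsum
      have h2 := (Finset.sum_eq_zero_iff_of_nonneg (fun i _ => Nat.cast_nonneg _)).1
        (hsum.trans (by simp)) v (Finset.mem_univ v)
      exact_mod_cast h2
    exact ⟨(hreg hr).ge, fun _ => hr, hreg⟩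
  have hm0 : (0 : ℝ) < m := by exact_mod_cast hmpos
  obtain ⟨a, hadef⟩ : ∃ a : ℝ, a = 2 * m / n := ⟨_, rfl⟩
  have ha : 0 < a := by rw [hadef]; positivity
  have hlow := edge_lower G ha
  have hT : ∑ v, (G.degree v : ℝ) * Real.log (G.degree v / a)
      = ∑ v, ((G.degree v : ℝ) * Real.log (G.degree v / a) - (G.degree v - a)) := by
    rw [Finset.sum_sub_distrib, Finset.sum_sub_distrib, hsum]
    have hna : ∑ _v : Fin n, a = 2 * m := by
      simp [hadef]
      field_simp
    rw [hna]; ring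
  have hnn : ∀ v ∈ Finset.univ,
      0 ≤ (G.degree v : ℝ) * Real.log (G.degree v / a) - (G.degree v - a) :=
    fun v _ => (gap_nonneg (Nat.cast_nonneg _) ha).1
  have hTnn := Finset.sum_nonneg hnn
  have hval : 4 * (m : ℝ) ^ 3 / (n : ℝ) ^ 2 = a ^ 2 * m := by
    rw [hadef]; field_simp; ring
  rw [hT, hm, mul_add] at hlow
  have ha2 : 0 < a ^ 2 := by positivity
  refine ⟨?_, fun h => ?_, hreg⟩
  · rw [hval]
    nlinarith [mul_nonneg ha2.le hTnn]
  · rw [h, hval] at hlow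
    have hT0 := le_antisymm (by by_contra hc; push Not at hc; nlinarith [mul_pos ha2 hc]) hTnn
    have hall := (Finset.sum_eq_zero_iff_of_nonneg hnn).1 hT0
    have hda : ∀ v, (G.degree v : ℝ) = a := fun v =>
      (gap_nonneg (Nat.cast_nonneg _) ha).2 (hall v (Finset.mem_univ v))
    refine ⟨G.degree ⟨0, hn⟩, fun v => ?_⟩
    exact_mod_cast (hda v).trans (hda ⟨0, hn⟩).symm
end

section
/- Let G be a finite simple graph on n ≥ 1 vertices with m edges. Then ∑_{ {u,v} ∉ E(G), u ≠ v } d_u d_v ≤ 2m² − 2m²/n − 4m³/n², where the sum runs over unordered pairs of distinct non-adjacent vertices. Moreover, equality holds if and only if G is regular. -/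
open Finset SimpleGraph
open scoped Classical

/-- The sum of `d_u * d_v` over unordered pairs `{u,v}` of distinct non-adjacent
vertices of `G`, as a real number. -/
noncomputable def nonEdgeDegSum {n : ℕ} (G : SimpleGraph (Fin n)) : ℝ :=
  ∑ e ∈ (Finset.univ : Finset (Sym2 (Fin n))).filter
      (fun e => ¬ e.IsDiag ∧ e ∉ G.edgeFinset),
    Sym2.lift ⟨fun u v => (G.degree u : ℝ) * (G.degree v : ℝ),
      fun _ _ => mul_comm _ _⟩ e

lemma two_nonEdge {n : ℕ} (G : SimpleGraph (Fin n)) :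
    2 * nonEdgeDegSum G = (∑ u, (G.degree u : ℝ)) ^ 2 - ∑ u, (G.degree u : ℝ) ^ 2
      - ∑ u, ∑ v, if G.Adj u v then (G.degree u : ℝ) * (G.degree v : ℝ) else 0 := by
  have h1 : nonEdgeDegSum G = ∑ u, ∑ v, if u < v then
      (if G.Adj u v then 0 else (G.degree u : ℝ) * (G.degree v : ℝ)) else 0 := by
    unfold nonEdgeDegSum
    rw [← Finset.filter_filter, Finset.sum_filter, ← Finset.sym2_univ,
      Finset.sum_sym2_filter_not_isDiag, Finset.sum_filter, ← Finset.sum_product',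
      Finset.univ_product_univ]
    refine Finset.sum_subset_zero_on_sdiff (Finset.subset_univ _) ?_ ?_
    · rintro ⟨a, b⟩ h
      have : a = b := by simpa using h
      simp [this]
    · rintro ⟨a, b⟩ h
      by_cases hab : G.Adj a b <;> simp [hab]
  have h2 : nonEdgeDegSum G = ∑ u, ∑ v, if v < u then
      (if G.Adj u v then 0 else (G.degree u : ℝ) * (G.degree v : ℝ)) else 0 := by
    rw [h1, Finset.sum_comm]
    refine Finset.sum_congr rfl fun u _ => Finset.sum_congr rfl fun v _ => ?_
    simp only [G.adj_comm, mul_comm]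
  have h3 : ∑ u, (G.degree u : ℝ) ^ 2 =
      ∑ u, ∑ v, if u = v then (G.degree u : ℝ) * (G.degree v : ℝ) else 0 := by
    simp [pow_two]
  rw [two_mul, h3, pow_two, Finset.sum_mul_sum]
  nth_rw 1 [h1]
  rw [h2]
  simp only [← Finset.sum_add_distrib, ← Finset.sum_sub_distrib]
  refine Finset.sum_congr rfl fun u _ => Finset.sum_congr rfl fun v _ => ?_
  rcases lt_trichotomy u v with h | h | h
  · by_cases hab : G.Adj u v <;> simp [hab, h, h.ne, h.le.not_gt]
  · subst h; simp
  · by_cases hab : G.Adj u v <;> simp [hab, h, h.ne', h.le.not_gt]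

lemma amgm (a b c : ℝ) (ha : 0 < a) (hb : 0 < b) (hc : 0 < c) :
    3 * c ^ 2 - c ^ 3 / a - c ^ 3 / b ≤ a * b := by
  have h1 : a * b - (3 * c ^ 2 - c ^ 3 / a - c ^ 3 / b)
      = ((a * b) ^ 2 - 3 * c ^ 2 * (a * b) + c ^ 3 * (a + b)) / (a * b) := by
    field_simp
    ring
  have h2 : 0 ≤ (a * b) ^ 2 - 3 * c ^ 2 * (a * b) + c ^ 3 * (a + b) := by
    obtain ⟨s, hs, rfl⟩ : ∃ s, 0 < s ∧ a = s ^ 2 :=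
      ⟨√a, Real.sqrt_pos.2 ha, (Real.sq_sqrt ha.le).symm⟩
    obtain ⟨t, ht, rfl⟩ : ∃ t, 0 < t ∧ b = t ^ 2 :=
      ⟨√b, Real.sqrt_pos.2 hb, (Real.sq_sqrt hb.le).symm⟩
    have e : (s ^ 2 * t ^ 2) ^ 2 - 3 * c ^ 2 * (s ^ 2 * t ^ 2) + c ^ 3 * (s ^ 2 + t ^ 2)
        = c ^ 3 * (s - t) ^ 2 + s * t * ((s * t - c) ^ 2 * (s * t + 2 * c)) := by
      ring
    rw [e]
    positivity
  have := div_nonneg h2 (mul_pos ha hb).le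
  linarith

lemma walk_bound {n : ℕ} (G : SimpleGraph (Fin n)) (c : ℝ) (hc : 0 < c)
    (hs : ∑ u, (G.degree u : ℝ) = n * c) :
    n * c ^ 3 ≤ ∑ u, ∑ v, if G.Adj u v then (G.degree u : ℝ) * (G.degree v : ℝ) else 0 := by
  have hdeg : ∀ u, ∑ v, (if G.Adj u v then (1 : ℝ) else 0) = G.degree u := by
    intro u
    rw [Finset.sum_boole, ← G.card_neighborFinset_eq_degree, G.neighborFinset_eq_filter]
  have hA : ∑ u, ∑ v, (if G.Adj u v then c ^ 3 / (G.degree u : ℝ) else 0) ≤ n * c ^ 3 := by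
    calc _ ≤ ∑ u : Fin n, c ^ 3 := by
          refine Finset.sum_le_sum fun u _ => ?_
          have : ∑ v, (if G.Adj u v then c ^ 3 / (G.degree u : ℝ) else 0)
              = c ^ 3 / (G.degree u : ℝ) * G.degree u := by
            rw [← hdeg u, Finset.mul_sum]
            simp
          rw [this]
          by_cases h : (G.degree u : ℝ) = 0
          · rw [h]; simp; positivity
          · rw [div_mul_cancel₀ _ h]
      _ = _ := by simp
  have hB : ∑ u, ∑ v, (if G.Adj u v then c ^ 3 / (G.degree v : ℝ) else 0)
      = ∑ u, ∑ v, (if G.Adj u v then c ^ 3 / (G.degree u : ℝ) else 0) := by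
    rw [Finset.sum_comm]
    simp only [G.adj_comm]
  have hC : ∑ u, ∑ v, (if G.Adj u v then 3 * c ^ 2 else 0) = 3 * c ^ 2 * (n * c) := by
    rw [← hs, Finset.mul_sum]
    refine Finset.sum_congr rfl fun u _ => ?_
    rw [← hdeg u, Finset.mul_sum]
    simp
  have hD : ∑ u, ∑ v, (if G.Adj u v then 3 * c ^ 2 else 0)
      - ∑ u, ∑ v, (if G.Adj u v then c ^ 3 / (G.degree u : ℝ) else 0)
      - ∑ u, ∑ v, (if G.Adj u v then c ^ 3 / (G.degree v : ℝ) else 0)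
      ≤ ∑ u, ∑ v, if G.Adj u v then (G.degree u : ℝ) * (G.degree v : ℝ) else 0 := by
    simp only [← Finset.sum_sub_distrib]
    refine Finset.sum_le_sum fun u _ => Finset.sum_le_sum fun v _ => ?_
    by_cases h : G.Adj u v
    · simp only [h, if_true]
      refine amgm _ _ _ ?_ ?_ hc
      · exact_mod_cast (G.degree_pos_iff_exists_adj u).2 ⟨v, h⟩
      · exact_mod_cast (G.degree_pos_iff_exists_adj v).2 ⟨u, h.symm⟩
    · simp [h]
  rw [hB, hC] at hD
  nlinarith

/-- For a graph `G` on `n ≥ 1` vertices with `m` edges,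
`∑_{uv ∉ E, u ≠ v} d_u d_v ≤ 2m² − 2m²/n − 4m³/n²`, with equality iff `G` is regular. -/
theorem stmt_1 (n : ℕ) (hn : 1 ≤ n) (G : SimpleGraph (Fin n))
    (m : ℕ) (hm : G.edgeFinset.card = m) :
    nonEdgeDegSum G ≤
      2 * (m : ℝ) ^ 2 - 2 * (m : ℝ) ^ 2 / (n : ℝ) - 4 * (m : ℝ) ^ 3 / (n : ℝ) ^ 2 ∧
    (nonEdgeDegSum G =
      2 * (m : ℝ) ^ 2 - 2 * (m : ℝ) ^ 2 / (n : ℝ) - 4 * (m : ℝ) ^ 3 / (n : ℝ) ^ 2 ↔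
      ∃ d, G.IsRegularOfDegree d) := by
  have hn0 : (0 : ℝ) < n := by exact_mod_cast hn
  have hs : ∑ u, (G.degree u : ℝ) = 2 * m := by
    have := G.sum_degrees_eq_twice_card_edges
    rw [hm] at this
    exact_mod_cast this
  have h2 := two_nonEdge G
  obtain ⟨c, hc⟩ : ∃ c : ℝ, c = 2 * m / n := ⟨_, rfl⟩
  have hmc : (m : ℝ) = n * c / 2 := by rw [hc]; field_simp
  have hs' : ∑ u, (G.degree u : ℝ) = n * c := by rw [hs, hmc]; ring
  have hc0 : 0 ≤ c := by rw [hc]; positivity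
  have hR : 2 * (m : ℝ) ^ 2 - 2 * (m : ℝ) ^ 2 / (n : ℝ) - 4 * (m : ℝ) ^ 3 / (n : ℝ) ^ 2
      = ((n * c) ^ 2 - n * c ^ 2 - n * c ^ 3) / 2 := by
    rw [hmc]; field_simp; ring
  rw [hR]
  have hW : n * c ^ 3 ≤
      ∑ u, ∑ v, if G.Adj u v then (G.degree u : ℝ) * (G.degree v : ℝ) else 0 := by
    rcases hc0.eq_or_lt with h | h
    · rw [← h]
      have : 0 ≤ ∑ u, ∑ v, if G.Adj u v then (G.degree u : ℝ) * (G.degree v : ℝ) else 0 := by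
        refine Finset.sum_nonneg fun u _ => Finset.sum_nonneg fun v _ => ?_
        split_ifs <;> positivity
      simpa using this
    · exact walk_bound G c h hs'
  have hV : ∑ u, ((G.degree u : ℝ) - c) ^ 2 = ∑ u, (G.degree u : ℝ) ^ 2 - n * c ^ 2 := by
    have : ∀ u, ((G.degree u : ℝ) - c) ^ 2
        = (G.degree u : ℝ) ^ 2 - 2 * c * G.degree u + c ^ 2 := fun u => by ring
    simp only [this, Finset.sum_add_distrib, Finset.sum_sub_distrib, ← Finset.mul_sum, hs']
    simp
    ring
  have hV0 : 0 ≤ ∑ u, ((G.degree u : ℝ) - c) ^ 2 := Finset.sum_nonneg fun u _ => sq_nonneg _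
  rw [hs'] at h2
  refine ⟨by linarith, fun h => ?_, ?_⟩
  · have hz : ∑ u, ((G.degree u : ℝ) - c) ^ 2 = 0 := by linarith
    rw [Finset.sum_eq_zero_iff_of_nonneg fun u _ => sq_nonneg _] at hz
    refine ⟨G.degree ⟨0, hn⟩, fun v => ?_⟩
    have a1 := pow_eq_zero_iff (two_ne_zero) |>.1 (hz v (Finset.mem_univ _))
    have a2 := pow_eq_zero_iff (two_ne_zero) |>.1 (hz ⟨0, hn⟩ (Finset.mem_univ _))
    have : (G.degree v : ℝ) = G.degree ⟨0, hn⟩ := by linarith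
    exact_mod_cast this
  · rintro ⟨d, hd⟩
    have hd' : ∀ v, G.degree v = d := hd
    have hcd : c = d := by
      have : (n : ℝ) * d = n * c := by rw [← hs']; simp [hd']
      exact (mul_left_cancel₀ hn0.ne' this).symm
    have hW' : (∑ u, ∑ v, if G.Adj u v then (G.degree u : ℝ) * (G.degree v : ℝ) else 0)
        = n * c ^ 3 := by
      have : ∀ u, (∑ v, if G.Adj u v then (G.degree u : ℝ) * (G.degree v : ℝ) else 0)
          = c ^ 3 := by
        intro u
        simp only [hd']
        rw [← Finset.sum_filter, ← G.neighborFinset_eq_filter, Finset.sum_const,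
          G.card_neighborFinset_eq_degree, hd', hcd]
        simp
        ring
      simp [this]
    have hS : ∑ u, (G.degree u : ℝ) ^ 2 = n * c ^ 2 := by simp [hd', hcd]
    rw [hW', hS] at h2
    linarith
end

section
/- Let G be a finite simple graph on n ≥ 1 vertices with m edges. Then A(G) ≤ 4m² − 4m²/n − 8m³/n² − 2·t(G). -/
open Finset SimpleGraph
open scoped Classical

/-- `A G` is the number of ordered quadruples `(u,v,w,x)` of pairwise distinct vertices
with `uv`, `wx` edges and `vw` a non-edge (ordered alternating 3-edge paths). -/
noncomputable def A {n : ℕ} (G : SimpleGraph (Fin n)) : ℕ :=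
  Finset.card <| (Finset.univ : Finset (Fin n × Fin n × Fin n × Fin n)).filter
    fun p =>
      p.1 ≠ p.2.1 ∧ p.1 ≠ p.2.2.1 ∧ p.1 ≠ p.2.2.2 ∧
      p.2.1 ≠ p.2.2.1 ∧ p.2.1 ≠ p.2.2.2 ∧ p.2.2.1 ≠ p.2.2.2 ∧
      G.Adj p.1 p.2.1 ∧ G.Adj p.2.2.1 p.2.2.2 ∧ ¬ G.Adj p.2.1 p.2.2.1

/-- `t G` is the number of 3-element vertex subsets of `G` spanning exactly two edges. -/
noncomputable def t {n : ℕ} (G : SimpleGraph (Fin n)) : ℕ :=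
  Finset.card <| (Finset.powersetCard 3 (Finset.univ : Finset (Fin n))).filter
    fun S => (G.edgeFinset.filter fun e => ∀ v ∈ e, v ∈ S).card = 2


lemma edge_amgm {a b c : ℝ} (ha : 0 < a) (hb : 0 < b) (hc : 0 < c) :
    3 * c ^ 2 ≤ a * b + c ^ 3 * a⁻¹ + c ^ 3 * b⁻¹ := by
  obtain ⟨x, hx, rfl⟩ : ∃ x : ℝ, 0 < x ∧ a = x ^ 2 :=
    ⟨√a, Real.sqrt_pos.2 ha, (Real.sq_sqrt ha.le).symm⟩
  obtain ⟨y, hy, rfl⟩ : ∃ x : ℝ, 0 < x ∧ b = x ^ 2 :=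
    ⟨√b, Real.sqrt_pos.2 hb, (Real.sq_sqrt hb.le).symm⟩
  have h : x ^ 2 * y ^ 2 + c ^ 3 * (x ^ 2)⁻¹ + c ^ 3 * (y ^ 2)⁻¹ - 3 * c ^ 2
      = ((x * y) * ((x * y - c) ^ 2 * (x * y + 2 * c)) + c ^ 3 * (x - y) ^ 2) / (x ^ 2 * y ^ 2) := by
    field_simp
    ring
  have : 0 ≤ ((x * y) * ((x * y - c) ^ 2 * (x * y + 2 * c)) + c ^ 3 * (x - y) ^ 2)
      / (x ^ 2 * y ^ 2) := by positivity
  linarith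

noncomputable def aa {n : ℕ} (G : SimpleGraph (Fin n)) (u v : Fin n) : ℝ :=
  if G.Adj u v then 1 else 0

noncomputable def dd {n : ℕ} (G : SimpleGraph (Fin n)) (u : Fin n) : ℝ := ∑ v, aa G u v

lemma aa_symm {n : ℕ} (G : SimpleGraph (Fin n)) (u v : Fin n) : aa G u v = aa G v u := by
  simp [aa, G.adj_comm]

lemma aa_nonneg {n : ℕ} (G : SimpleGraph (Fin n)) (u v : Fin n) : 0 ≤ aa G u v := by
  unfold aa; split_ifs <;> norm_num

lemma dd_nonneg {n : ℕ} (G : SimpleGraph (Fin n)) (u : Fin n) : 0 ≤ dd G u :=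
  Finset.sum_nonneg fun _ _ => aa_nonneg _ _ _

lemma dd_pos {n : ℕ} (G : SimpleGraph (Fin n)) {u v : Fin n} (h : G.Adj u v) : 0 < dd G u := by
  have h1 : aa G u v ≤ dd G u :=
    Finset.single_le_sum (f := fun v => aa G u v) (fun _ _ => aa_nonneg _ _ _) (Finset.mem_univ v)
  have h2 : aa G u v = 1 := by simp [aa, h]
  linarith

lemma dd_sum {n : ℕ} (G : SimpleGraph (Fin n)) : ∑ u, dd G u = 2 * (G.edgeFinset.card : ℝ) := by
  have h := G.sum_degrees_eq_twice_card_edges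
  have h2 : ∀ u, dd G u = (G.degree u : ℝ) := by
    intro u
    unfold dd aa
    rw [Finset.sum_boole]
    congr 2
    ext v
    simp
  simp only [h2]
  exact_mod_cast h

lemma inv_sum {n : ℕ} (G : SimpleGraph (Fin n)) : ∑ u, ∑ v, aa G u v * (dd G u)⁻¹ ≤ n := by
  have : ∀ u ∈ (Finset.univ : Finset (Fin n)), ∑ v, aa G u v * (dd G u)⁻¹ ≤ 1 := by
    intro u _
    rw [← Finset.sum_mul]
    exact mul_inv_le_one
  simpa using Finset.sum_le_sum this

lemma walks {n : ℕ} (hn : 1 ≤ n) (G : SimpleGraph (Fin n)) {m : ℝ} (hm : ∑ u, dd G u = 2 * m) :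
    8 * m ^ 3 / (n : ℝ) ^ 2 ≤ ∑ u, ∑ v, aa G u v * (dd G u * dd G v) := by
  have hn' : (0 : ℝ) < n := by exact_mod_cast hn
  have hm0 : 0 ≤ 2 * m := hm ▸ Finset.sum_nonneg fun _ _ => dd_nonneg _ _
  rcases hm0.eq_or_lt with h0 | h0
  · have : m = 0 := by linarith
    subst this
    simp only [ne_eq, OfNat.ofNat_ne_zero, not_false_eq_true, zero_pow, mul_zero, zero_div]
    exact Finset.sum_nonneg fun _ _ => Finset.sum_nonneg fun _ _ =>
      mul_nonneg (aa_nonneg _ _ _) (mul_nonneg (dd_nonneg _ _) (dd_nonneg _ _))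
  obtain ⟨c, hc⟩ : ∃ c : ℝ, c = 2 * m / n := ⟨_, rfl⟩
  have hcp : 0 < c := hc ▸ div_pos h0 hn'
  have key : ∑ u, ∑ v, aa G u v * (3 * c ^ 2) ≤ ∑ u, ∑ v, (aa G u v * (dd G u * dd G v) +
      c ^ 3 * (aa G u v * (dd G u)⁻¹) + c ^ 3 * (aa G u v * (dd G v)⁻¹)) := by
    refine Finset.sum_le_sum fun u _ => Finset.sum_le_sum fun v _ => ?_
    by_cases h : G.Adj u v
    · have := edge_amgm (dd_pos G h) (dd_pos G h.symm) hcp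
      simpa [aa, h] using this
    · simp [aa, h]
  simp only [Finset.sum_add_distrib, ← Finset.mul_sum, ← Finset.sum_mul] at key
  have h1 := inv_sum G
  have h2 : ∑ u, ∑ v, aa G u v * (dd G v)⁻¹ ≤ n := by
    rw [Finset.sum_comm]
    refine le_trans (le_of_eq ?_) h1
    exact Finset.sum_congr rfl fun u _ => Finset.sum_congr rfl fun v _ => by rw [aa_symm]
  have h3 : ∑ u, ∑ v, aa G u v = 2 * m := hm
  have h1' := mul_le_mul_of_nonneg_left h1 (pow_pos hcp 3).le
  have h2' := mul_le_mul_of_nonneg_left h2 (pow_pos hcp 3).le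
  have e1 : 8 * m ^ 3 / (n : ℝ) ^ 2 = c ^ 3 * n := by rw [hc]; field_simp; ring
  have e2 : 2 * m = c * n := by rw [hc]; field_simp
  rw [h3, e2] at key
  simp only [← Finset.sum_mul] at h1'
  rw [e1]
  nlinarith

lemma sq_sum {n : ℕ} (hn : 1 ≤ n) (G : SimpleGraph (Fin n)) {m : ℝ} (hm : ∑ u, dd G u = 2 * m) :
    4 * m ^ 2 / (n : ℝ) ≤ ∑ u, dd G u * dd G u := by
  have hn' : (0 : ℝ) < n := by exact_mod_cast hn
  rw [div_le_iff₀ hn']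
  have := sq_sum_le_card_mul_sum_sq (s := (Finset.univ : Finset (Fin n))) (f := dd G)
  rw [hm] at this
  simp only [Finset.card_univ, Fintype.card_fin] at this
  simp only [← pow_two]
  linarith

noncomputable def PP {n : ℕ} (G : SimpleGraph (Fin n)) : Finset (Fin n × Fin n × Fin n) :=
  Finset.univ.filter fun p => G.Adj p.1 p.2.1 ∧ G.Adj p.1 p.2.2 ∧ p.2.1 ≠ p.2.2 ∧
    ¬ G.Adj p.2.1 p.2.2

lemma cherry {n : ℕ} (G : SimpleGraph (Fin n)) (S : Finset (Fin n)) (hS : S.card = 3)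
    (h : (G.edgeFinset.filter fun e => ∀ v ∈ e, v ∈ S).card = 2) :
    ∃ u v w, G.Adj u v ∧ G.Adj u w ∧ v ≠ w ∧ ¬ G.Adj v w ∧ ({u, v, w} : Finset (Fin n)) = S := by
  obtain ⟨x, y, z, hxy, hxz, hyz, rfl⟩ := Finset.card_eq_three.1 hS
  have e : (G.edgeFinset.filter fun e => ∀ v ∈ e, v ∈ ({x, y, z} : Finset (Fin n)))
      = (if G.Adj x y then {s(x, y)} else ∅) ∪ ((if G.Adj x z then {s(x, z)} else ∅) ∪
        (if G.Adj y z then {s(y, z)} else ∅)) := by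
    ext e
    induction e using Sym2.ind with
    | _ a b =>
      simp only [Finset.mem_filter, SimpleGraph.mem_edgeFinset, SimpleGraph.mem_edgeSet,
        Finset.mem_union, Sym2.mem_iff, Finset.mem_insert, Finset.mem_singleton]
      have hs := G.adj_comm
      have hi : ∀ v, ¬ G.Adj v v := fun v => G.irrefl
      constructor
      · rintro ⟨hab, hv⟩
        have ha := hv a (Or.inl rfl)
        have hb := hv b (Or.inr rfl)
        rcases ha with rfl | rfl | rfl <;> rcases hb with rfl | rfl | rfl <;>
          simp_all [Sym2.eq_iff] <;> simp [hab.symm]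
      · intro h
        split_ifs at h <;> simp [Sym2.eq_iff] at h <;> grind
  rw [e] at h
  by_cases h1 : G.Adj x y <;> by_cases h2 : G.Adj x z <;> by_cases h3 : G.Adj y z
  · exfalso
    have : #({s(x, y), s(x, z), s(y, z)} : Finset (Sym2 (Fin n))) = 3 := by
      rw [Finset.card_eq_three]
      refine ⟨_, _, _, ?_, ?_, ?_, rfl⟩ <;> simp [Sym2.eq_iff] <;> grind
    simp only [h1, h2, h3, if_true] at h
    change #({s(x, y), s(x, z), s(y, z)} : Finset (Sym2 (Fin n))) = 2 at h
    omega
  · exact ⟨x, y, z, h1, h2, hyz, h3, rfl⟩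
  · exact ⟨y, x, z, h1.symm, h3, hxz, h2, by grind⟩
  · simp [h1, h2, h3] at h
  · exact ⟨z, x, y, h2.symm, h3.symm, hxy, h1, by grind⟩
  all_goals simp [h1, h2, h3] at h

lemma two_t {n : ℕ} (G : SimpleGraph (Fin n)) : 2 * t G ≤ (PP G).card := by
  unfold t
  rw [mul_comm]
  set T := (Finset.powersetCard 3 (Finset.univ : Finset (Fin n))).filter
    fun S => (G.edgeFinset.filter fun e => ∀ v ∈ e, v ∈ S).card = 2 with hT
  let f : Fin n × Fin n × Fin n → Finset (Fin n) := fun p => {p.1, p.2.1, p.2.2}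
  have h1 : ∀ S ∈ T, 2 ≤ #{p ∈ (PP G).filter (fun p => f p ∈ T) | f p = S} := by
    intro S hS
    have hS' := hS
    simp only [hT, Finset.mem_filter, Finset.mem_powersetCard] at hS'
    obtain ⟨u, v, w, a1, a2, a3, a4, a5⟩ := cherry G S hS'.1.2 hS'.2
    have a6 : ({u, w, v} : Finset (Fin n)) = S := by rw [← a5]; grind
    have : ({(u, v, w), (u, w, v)} : Finset (Fin n × Fin n × Fin n)) ⊆
        {p ∈ (PP G).filter (fun p => f p ∈ T) | f p = S} := by
      intro p hp
      simp only [Finset.mem_insert, Finset.mem_singleton] at hp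
      rcases hp with rfl | rfl
      · simp only [Finset.mem_filter, f, a5, hS, PP]
        simp [a1, a2, a3, a4]
      · simp only [Finset.mem_filter, f, a6, hS, PP]
        simp [a1, a2, a3.symm, a4, G.adj_comm w v]
    refine le_trans (le_of_eq ?_) (Finset.card_le_card this)
    rw [Finset.card_pair]
    simp [a3]
  have h2 := Finset.card_eq_sum_card_fiberwise (f := f) (s := (PP G).filter (fun p => f p ∈ T))
    (t := T) (fun p hp => by
      have := Finset.mem_coe.1 hp
      exact Finset.mem_coe.2 (Finset.mem_filter.1 this).2)
  calc #T * 2 = ∑ S ∈ T, 2 := by simp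
    _ ≤ _ := Finset.sum_le_sum h1
    _ = _ := h2.symm
    _ ≤ _ := Finset.card_le_card (Finset.filter_subset _ _)

lemma PP_sum {n : ℕ} (G : SimpleGraph (Fin n)) : ((PP G).card : ℝ) =
    ∑ u, ∑ v, ∑ w, if G.Adj u v ∧ G.Adj u w ∧ v ≠ w ∧ ¬ G.Adj v w then (1 : ℝ) else 0 := by
  unfold PP
  rw [← Finset.sum_boole, Fintype.sum_prod_type]
  simp only [Fintype.sum_prod_type]

lemma A_sum {n : ℕ} (G : SimpleGraph (Fin n)) : (A G : ℝ) + (PP G).card =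
    (∑ u, dd G u) ^ 2 - ∑ u, dd G u * dd G u - ∑ u, ∑ v, aa G u v * (dd G u * dd G v) := by
  have hA : (A G : ℝ) = ∑ v, ∑ w, ∑ u, ∑ x, (aa G v u * aa G w x
      - (if v = w then aa G v u * aa G v x else 0) - aa G v w * (aa G v u * aa G w x)
      - if u = x then (if G.Adj u v ∧ G.Adj u w ∧ v ≠ w ∧ ¬ G.Adj v w then (1 : ℝ) else 0)
        else 0) := by
    unfold A
    rw [← Finset.sum_boole]
    simp only [Fintype.sum_prod_type]
    rw [Finset.sum_comm]
    refine Finset.sum_congr rfl fun v _ => ?_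
    rw [Finset.sum_comm]
    refine Finset.sum_congr rfl fun w _ => Finset.sum_congr rfl fun u _ =>
      Finset.sum_congr rfl fun x _ => ?_
    have hi : ∀ v, ¬ G.Adj v v := fun v => G.irrefl
    have c1 := G.adj_comm u v
    have c2 := G.adj_comm w v
    have c3 := G.adj_comm w u
    have c4 := G.adj_comm w x
    unfold aa
    by_cases hvw : v = w
    · subst hvw
      by_cases h1 : G.Adj v u <;> by_cases h2 : G.Adj v x <;> simp [h1, h2]
    by_cases hvw' : G.Adj v w
    · simp [hvw, hvw']
    by_cases h1 : G.Adj v u <;> by_cases h2 : G.Adj w x <;> by_cases hux : u = x <;>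
      grind
  rw [hA, PP_sum]
  simp only [Finset.sum_sub_distrib]
  have e1 : ∑ v, ∑ w, ∑ u, ∑ x, aa G v u * aa G w x = (∑ u, dd G u) ^ 2 := by
    simp only [← Finset.mul_sum, ← Finset.sum_mul, pow_two]
    rfl
  have e2 : ∑ v, ∑ w, ∑ u, ∑ x, (if v = w then aa G v u * aa G v x else 0)
      = ∑ u, dd G u * dd G u := by
    refine Finset.sum_congr rfl fun v _ => ?_
    rw [Finset.sum_eq_single v]
    · simp only [if_true, ← Finset.mul_sum, ← Finset.sum_mul]
      rfl
    · intro w _ h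
      simp [h.symm]
    · simp
  have e3 : ∑ v, ∑ w, ∑ u, ∑ x, aa G v w * (aa G v u * aa G w x)
      = ∑ u, ∑ v, aa G u v * (dd G u * dd G v) := by
    refine Finset.sum_congr rfl fun v _ => Finset.sum_congr rfl fun w _ => ?_
    simp only [← Finset.mul_sum, ← Finset.sum_mul]
    rfl
  have e4 : ∑ v, ∑ w, ∑ u, ∑ x, (if u = x then
      (if G.Adj u v ∧ G.Adj u w ∧ v ≠ w ∧ ¬ G.Adj v w then (1 : ℝ) else 0) else 0)
      = ∑ u, ∑ v, ∑ w, if G.Adj u v ∧ G.Adj u w ∧ v ≠ w ∧ ¬ G.Adj v w then (1 : ℝ) else 0 := by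
    simp only [Finset.sum_ite_eq, Finset.mem_univ, if_true]
    rw [Finset.sum_comm (s := (Finset.univ : Finset (Fin n))) (t := Finset.univ) (f := fun u v =>
      ∑ w, if G.Adj u v ∧ G.Adj u w ∧ v ≠ w ∧ ¬ G.Adj v w then (1 : ℝ) else 0)]
    exact Finset.sum_congr rfl fun v _ => Finset.sum_comm
  rw [e1, e2, e3, e4]
  ring

/-- For a graph on `n ≥ 1` vertices with `m` edges,
`A(G) ≤ 4m² − 4m²/n − 8m³/n² − 2 t(G)`. -/
theorem stmt_3 (n : ℕ) (hn : 1 ≤ n) (G : SimpleGraph (Fin n))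
    (m : ℕ) (hm : G.edgeFinset.card = m) :
    (A G : ℝ) ≤ 4 * (m : ℝ) ^ 2 - 4 * (m : ℝ) ^ 2 / (n : ℝ)
      - 8 * (m : ℝ) ^ 3 / (n : ℝ) ^ 2 - 2 * (t G : ℝ) := by
  have hs : ∑ u, dd G u = 2 * (m : ℝ) := by rw [dd_sum, ← hm]
  have h1 := walks hn G hs
  have h2 := sq_sum hn G hs
  have h3 := A_sum G
  have h4 : 2 * (t G : ℝ) ≤ ((PP G).card : ℝ) := by exact_mod_cast two_t G
  rw [hs] at h3
  nlinarith
end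

section
/- Let β ∈ [0,1]. For every sequence (G_n)_{n≥2} of finite simple graphs, where G_n has exactly n vertices and the edge density of G_n tends to β as n → ∞, one has limsup_{n→∞} A(G_n)/n⁴ ≤ β²(1−β). Moreover, there exists such a sequence (G_n) with edge density tending to β for which A(G_n)/n⁴ converges to β²(1−β). -/
open Finset SimpleGraph Filter
open scoped Classical

/-- The edge density of an `n`-vertex graph: `m / (n choose 2)`. -/
noncomputable def density {n : ℕ} (G : SimpleGraph (Fin n)) : ℝ :=
  (G.edgeFinset.card : ℝ) / (n.choose 2 : ℝ)

noncomputable def adjI {n : ℕ} (G : SimpleGraph (Fin n)) (v w : Fin n) : ℝ :=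
  if G.Adj v w then 1 else 0

noncomputable def degR {n : ℕ} (G : SimpleGraph (Fin n)) (v : Fin n) : ℝ := ∑ w, adjI G v w

noncomputable def totS {n : ℕ} (G : SimpleGraph (Fin n)) : ℝ := ∑ v, degR G v

noncomputable def pathP {n : ℕ} (G : SimpleGraph (Fin n)) : ℝ :=
  ∑ v, ∑ w, adjI G v w * (degR G v * degR G w)

lemma adjI_comm {n : ℕ} (G : SimpleGraph (Fin n)) (v w : Fin n) : adjI G v w = adjI G w v := by
  simp [adjI, G.adj_comm]

lemma adjI_nonneg {n : ℕ} (G : SimpleGraph (Fin n)) (v w : Fin n) : 0 ≤ adjI G v w := by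
  unfold adjI; split_ifs <;> norm_num

lemma degR_nonneg {n : ℕ} (G : SimpleGraph (Fin n)) (v : Fin n) : 0 ≤ degR G v :=
  Finset.sum_nonneg fun _ _ => adjI_nonneg G _ _

lemma totS_nonneg {n : ℕ} (G : SimpleGraph (Fin n)) : 0 ≤ totS G :=
  Finset.sum_nonneg fun _ _ => degR_nonneg G _

lemma totS_eq {n : ℕ} (G : SimpleGraph (Fin n)) : totS G = 2 * (G.edgeFinset.card : ℝ) := by
  have h := G.sum_degrees_eq_twice_card_edges
  have h2 : totS G = ((∑ v, G.degree v : ℕ) : ℝ) := by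
    unfold totS degR adjI
    push_cast
    refine Finset.sum_congr rfl fun v _ => ?_
    rw [← SimpleGraph.card_neighborFinset_eq_degree, SimpleGraph.neighborFinset_eq_filter]
    simp
  rw [h2, h]; push_cast; congr!

lemma totS_density {n : ℕ} (hn : 2 ≤ n) (G : SimpleGraph (Fin n)) :
    totS G = density G * (n * (n - 1)) := by
  rw [totS_eq, density, Nat.cast_choose_two]
  have h : (2:ℝ) ≤ n := by exact_mod_cast hn
  have h1 : (n:ℝ) ≠ 0 := by positivity
  have h2 : (n:ℝ) - 1 ≠ 0 := by linarith
  field_simp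

lemma T_eq {n : ℕ} (G : SimpleGraph (Fin n)) :
    ∑ u, ∑ v, ∑ w, ∑ x, adjI G u v * adjI G w x * (1 - adjI G v w) = totS G ^ 2 - pathP G := by
  have e1 : totS G ^ 2 = ∑ v, ∑ w, degR G v * degR G w := by
    rw [sq, totS, Finset.sum_mul_sum]
  rw [e1, pathP, ← Finset.sum_sub_distrib, Finset.sum_comm]
  refine Finset.sum_congr rfl fun v _ => ?_
  rw [← Finset.sum_sub_distrib, Finset.sum_comm]
  refine Finset.sum_congr rfl fun w _ => ?_
  have : degR G v * degR G w = ∑ u, ∑ x, adjI G u v * adjI G w x := by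
    rw [degR, degR, Finset.sum_mul_sum]
    simp_rw [adjI_comm G v]
  simp_rw [← Finset.sum_mul]
  rw [← this]; ring

lemma A_eq {n : ℕ} (G : SimpleGraph (Fin n)) : (A G : ℝ) = ∑ u, ∑ v, ∑ w, ∑ x,
    if (u ≠ v ∧ u ≠ w ∧ u ≠ x ∧ v ≠ w ∧ v ≠ x ∧ w ≠ x ∧ G.Adj u v ∧ G.Adj w x ∧ ¬ G.Adj v w)
    then (1:ℝ) else 0 := by
  unfold A
  rw [Finset.card_filter]
  simp only [Fintype.sum_prod_type]
  push_cast
  rfl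

lemma A_le {n : ℕ} (G : SimpleGraph (Fin n)) : (A G : ℝ) ≤ totS G ^ 2 - pathP G := by
  rw [A_eq, ← T_eq]
  refine Finset.sum_le_sum fun u _ => Finset.sum_le_sum fun v _ => Finset.sum_le_sum fun w _ =>
    Finset.sum_le_sum fun x _ => ?_
  unfold adjI
  split_ifs <;> simp_all

lemma le_A {n : ℕ} (G : SimpleGraph (Fin n)) :
    totS G ^ 2 - pathP G ≤ (A G : ℝ) + 2 * (n:ℝ) ^ 3 := by
  have h : ∑ u : Fin n, ∑ v : Fin n, ∑ w : Fin n, ∑ x : Fin n,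
      ((if v = w then (1:ℝ) else 0) + if u = x then (1:ℝ) else 0) = 2 * (n:ℝ)^3 := by
    simp [Finset.sum_add_distrib]
    ring
  rw [A_eq, ← T_eq, ← h]
  simp only [← Finset.sum_add_distrib]
  refine Finset.sum_le_sum fun u _ => Finset.sum_le_sum fun v _ => Finset.sum_le_sum fun w _ =>
    Finset.sum_le_sum fun x _ => ?_
  by_cases h1 : G.Adj u v
  swap
  · simp [adjI, h1]; positivity
  by_cases h2 : G.Adj w x
  swap
  · simp [adjI, h2]; positivity
  by_cases h3 : G.Adj v w
  · simp [adjI, h3]; positivity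
  by_cases h4 : v = w
  · have hw : ¬ G.Adj w w := G.irrefl
    simp [adjI, h2, h4]
    repeat' split_ifs
    all_goals norm_num
  by_cases h5 : u = x
  · simp [adjI, h2, h3, h5]
    repeat' split_ifs
    all_goals norm_num
  have h6 : u ≠ w := by rintro rfl; exact h3 h1.symm
  have h7 : v ≠ x := by rintro rfl; exact h3 h2.symm
  simp [adjI, h1, h2, h3, h4, h5, h6, h7, h1.ne, h2.ne]

lemma amgm_s4 (x y : ℝ) (hx : 0 < x) (hy : 0 < y) : 3 ≤ x * y + 1 / x + 1 / y := by
  have h : x * y + 1 / x + 1 / y - 3 = (x^2*y^2 + x + y - 3 * (x*y)) / (x*y) := by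
    field_simp; ring
  have h2 : 0 ≤ x^2*y^2 + x + y - 3 * (x*y) := by
    obtain ⟨a, ha, rfl⟩ : ∃ a, 0 < a ∧ a^2 = x := ⟨√x, Real.sqrt_pos.2 hx, Real.sq_sqrt hx.le⟩
    obtain ⟨b, hb, rfl⟩ : ∃ a, 0 < a ∧ a^2 = y := ⟨√y, Real.sqrt_pos.2 hy, Real.sq_sqrt hy.le⟩
    have hp : 0 < a * b := by positivity
    have : 0 ≤ (a*b) * (((a*b) - 1)^2 * ((a*b) + 2)) := by positivity
    nlinarith [sq_nonneg (a - b)]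
  have : 0 ≤ (x^2*y^2 + x + y - 3 * (x*y)) / (x*y) := by positivity
  linarith

lemma pathP_ge {n : ℕ} (G : SimpleGraph (Fin n)) : totS G ^ 3 ≤ pathP G * (n:ℝ) ^ 2 := by
  rcases (totS_nonneg G).eq_or_lt with h0 | hS
  · rw [← h0]
    have : 0 ≤ pathP G := Finset.sum_nonneg fun v _ => Finset.sum_nonneg fun w _ =>
      mul_nonneg (adjI_nonneg _ _ _) (mul_nonneg (degR_nonneg _ _) (degR_nonneg _ _))
    simp; positivity
  have hn : (0:ℝ) < n := by
    rcases Nat.eq_zero_or_pos n with rfl | h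
    · simp [totS] at hS
    · exact_mod_cast h
  obtain ⟨q, hq⟩ : ∃ q, q = totS G / n := ⟨_, rfl⟩
  have hq0 : 0 < q := by rw [hq]; positivity
  have hSq : totS G = q * n := by rw [hq]; field_simp
  have hd : ∀ v w, G.Adj v w → 0 < degR G v := fun v w h => by
    have : adjI G v w ≤ degR G v :=
      Finset.single_le_sum (f := fun w => adjI G v w) (fun i _ => adjI_nonneg G v i) (mem_univ w)
    simp [adjI, h] at this
    linarith
  have hb : ∑ v, ∑ w, adjI G v w * (q / degR G v) ≤ q * n := by
    simp_rw [← Finset.sum_mul]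
    calc _ ≤ ∑ v : Fin n, q := by
          refine Finset.sum_le_sum fun v _ => ?_
          change degR G v * _ ≤ q
          rcases (degR_nonneg G v).eq_or_lt with h | h
          · rw [← h]; simp [hq0.le]
          · exact le_of_eq (by field_simp)
      _ = _ := by simp [mul_comm]
  have hb' : ∑ v, ∑ w, adjI G v w * (q / degR G w) ≤ q * n := by
    rw [Finset.sum_comm]
    simp_rw [fun v w => adjI_comm G v w] at hb ⊢
    refine le_trans (le_of_eq ?_) hb
    refine Finset.sum_congr rfl fun v _ => Finset.sum_congr rfl fun w _ => ?_
    first | rfl | rw [adjI_comm]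
  have hm : 3 * totS G ≤ pathP G / q^2 + ∑ v, ∑ w, adjI G v w * (q / degR G v)
      + ∑ v, ∑ w, adjI G v w * (q / degR G w) := by
    unfold pathP totS
    rw [Finset.sum_div, Finset.mul_sum, ← Finset.sum_add_distrib, ← Finset.sum_add_distrib]
    refine Finset.sum_le_sum fun v _ => ?_
    rw [Finset.sum_div, ← Finset.sum_add_distrib, ← Finset.sum_add_distrib]
    conv_lhs => rw [degR, Finset.mul_sum]
    refine Finset.sum_le_sum fun w _ => ?_
    by_cases h : G.Adj v w
    · have h1 := hd v w h
      have h2 := hd w v h.symm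
      have := amgm_s4 (degR G v / q) (degR G w / q) (by positivity) (by positivity)
      simp only [adjI, h, if_true]
      have e : 1 * (degR G v * degR G w) / q ^ 2 + 1 * (q / degR G v) + 1 * (q / degR G w) =
          degR G v / q * (degR G w / q) + 1 / (degR G v / q) + 1 / (degR G w / q) := by
        field_simp
      rw [e, mul_one]; exact this
    · simp [adjI, h]
  have : q * n ≤ pathP G / q^2 := by linarith
  rw [le_div_iff₀ (by positivity)] at this
  rw [hSq]
  nlinarith [mul_le_mul_of_nonneg_right this (sq_nonneg (n:ℝ))]

lemma A_upper {n : ℕ} (hn : 0 < n) (G : SimpleGraph (Fin n)) :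
    (A G : ℝ) / (n:ℝ)^4 ≤ (totS G / (n:ℝ)^2)^2 - (totS G / (n:ℝ)^2)^3 := by
  have hn' : (0:ℝ) < n := by exact_mod_cast hn
  have h1 := A_le G
  have h2 := pathP_ge G
  have e : (totS G / (n:ℝ)^2)^2 - (totS G / (n:ℝ)^2)^3
      = (totS G ^2 - totS G ^3 / (n:ℝ)^2) / (n:ℝ)^4 := by field_simp
  rw [e]
  gcongr
  have : totS G ^3 / (n:ℝ)^2 ≤ pathP G := by rw [div_le_iff₀ (by positivity)]; exact h2
  linarith

lemma totS_tendsto (β : ℝ) (G : (n : ℕ) → SimpleGraph (Fin n))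
    (h : Tendsto (fun n => density (G n)) atTop (nhds β)) :
    Tendsto (fun n => totS (G n) / (n:ℝ)^2) atTop (nhds β) := by
  have h1 : Tendsto (fun n : ℕ => density (G n) * (1 - 1 / (n:ℝ))) atTop (nhds (β * (1 - 0))) :=
    h.mul (tendsto_const_nhds.sub tendsto_one_div_atTop_nhds_zero_nat)
  simp only [sub_zero, mul_one] at h1
  refine h1.congr' ?_
  filter_upwards [eventually_ge_atTop 2] with n hn
  rw [totS_density hn]
  have : (n:ℝ) ≠ 0 := by positivity
  field_simp

/-- Cayley sum graph. -/
noncomputable def sumG (n k : ℕ) : SimpleGraph (Fin n) where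
  Adj v w := v ≠ w ∧ (v.val + w.val) % n < k
  symm := ⟨fun v w h => ⟨h.1.symm, by rw [add_comm]; exact h.2⟩⟩
  loopless := ⟨fun v h => h.1 rfl⟩

lemma sum_deg {n k : ℕ} (hk : k ≤ n) (v : Fin n) :
    degR (sumG n k) v ≤ k ∧ (k:ℝ) - 1 ≤ degR (sumG n k) v := by
  have hn : NeZero n := ⟨by rintro rfl; exact v.elim0⟩
  have e : ∑ w : Fin n, (if (v.val + w.val) % n < k then (1:ℝ) else 0) = k := by
    have : ∑ w : Fin n, (if (v.val + w.val) % n < k then (1:ℝ) else 0)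
        = ∑ w : Fin n, (if w.val < k then (1:ℝ) else 0) := by
      refine Fintype.sum_equiv (Equiv.addLeft v) _ _ fun w => ?_
      simp only [Equiv.coe_addLeft, Fin.val_add]
      congr!
    rw [this, Fin.sum_univ_eq_sum_range (fun i => if i < k then (1:ℝ) else 0) n,
      Finset.sum_ite]
    have : (Finset.range n).filter (fun i => i < k) = Finset.range k := by
      ext i; simp; omega
    simp [this]
  constructor
  · rw [← e, degR]
    refine Finset.sum_le_sum fun w _ => ?_
    clear e
    by_cases h1 : v = w <;> by_cases h2 : (v.val + w.val) % n < k <;> simp [adjI, sumG, h1, h2]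
    all_goals try split_ifs
    all_goals norm_num
  · rw [sub_le_iff_le_add, ← e, degR]
    have : ∑ w : Fin n, (if v = w then (1:ℝ) else 0) = 1 := by simp
    rw [← this, ← Finset.sum_add_distrib]
    refine Finset.sum_le_sum fun w _ => ?_
    clear e
    by_cases h1 : v = w <;> by_cases h2 : (v.val + w.val) % n < k <;> simp [adjI, sumG, h1, h2]
    all_goals try split_ifs
    all_goals norm_num

lemma sum_totS {n k : ℕ} (hk : k ≤ n) :
    totS (sumG n k) ≤ n * k ∧ n * ((k:ℝ) - 1) ≤ totS (sumG n k) := by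
  constructor
  · calc totS (sumG n k) ≤ ∑ v : Fin n, (k:ℝ) := Finset.sum_le_sum fun v _ => (sum_deg hk v).1
      _ = _ := by simp
  · calc n * ((k:ℝ) - 1) = ∑ v : Fin n, ((k:ℝ) - 1) := by simp; ring
      _ ≤ _ := Finset.sum_le_sum fun v _ => (sum_deg hk v).2

lemma sum_pathP {n k : ℕ} (hk : k ≤ n) :
    pathP (sumG n k) ≤ (k:ℝ)^2 * totS (sumG n k) := by
  unfold pathP totS
  rw [Finset.mul_sum]
  refine Finset.sum_le_sum fun v _ => ?_
  conv_rhs => rw [degR, Finset.mul_sum]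
  refine Finset.sum_le_sum fun w _ => ?_
  rw [mul_comm, sq]
  refine mul_le_mul_of_nonneg_right ?_ (adjI_nonneg _ _ _)
  exact mul_le_mul (sum_deg hk v).1 (sum_deg hk w).1 (degR_nonneg _ _) (by positivity)

/-- `I(AP₄, β) = β²(1−β)`: every sequence of graphs with edge density tending to `β`
has `limsup A(G_n)/n⁴ ≤ β²(1−β)`, and this bound is attained by some sequence. -/
theorem stmt_4 (β : ℝ) (hβ0 : 0 ≤ β) (hβ1 : β ≤ 1) :
    (∀ G : (n : ℕ) → SimpleGraph (Fin n),
      Tendsto (fun n => density (G n)) atTop (nhds β) →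
      limsup (fun n => (A (G n) : ℝ) / (n : ℝ) ^ 4) atTop ≤ β ^ 2 * (1 - β)) ∧
    (∃ G : (n : ℕ) → SimpleGraph (Fin n),
      Tendsto (fun n => density (G n)) atTop (nhds β) ∧
      Tendsto (fun n => (A (G n) : ℝ) / (n : ℝ) ^ 4) atTop (nhds (β ^ 2 * (1 - β)))) := by
  have hcube : β ^ 2 * (1 - β) = β ^ 2 - β ^ 3 := by ring
  constructor
  · intro G hG
    have hS := totS_tendsto β G hG
    have hU := (hS.pow 2).sub (hS.pow 3)
    rw [hcube, ← hU.limsup_eq]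
    refine limsup_le_limsup ?_ ?_ hU.isBoundedUnder_le
    · filter_upwards [eventually_gt_atTop 0] with n hn using A_upper hn (G n)
    · exact IsCoboundedUnder.of_frequently_ge (a := 0)
        (Frequently.of_forall fun n => by positivity)
  · have hk : ∀ n : ℕ, ⌊β * n⌋₊ ≤ n := fun n => by
      apply Nat.floor_le_of_le
      nlinarith [(Nat.cast_nonneg n : (0:ℝ) ≤ n)]
    have hkn : Tendsto (fun n : ℕ => (⌊β * (n:ℝ)⌋₊ : ℝ) / n) atTop (nhds β) :=
      (tendsto_nat_floor_mul_div_atTop hβ0).comp tendsto_natCast_atTop_atTop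
    have hinv : Tendsto (fun n : ℕ => 1 / (n:ℝ)) atTop (nhds 0) :=
      tendsto_one_div_atTop_nhds_zero_nat
    have hS : Tendsto (fun n : ℕ => totS (sumG n ⌊β * n⌋₊) / (n:ℝ)^2) atTop (nhds β) := by
      have hl := hkn.sub hinv
      rw [sub_zero] at hl
      refine tendsto_of_tendsto_of_tendsto_of_le_of_le' hl hkn ?_ ?_
      · filter_upwards [eventually_gt_atTop 0] with n hn
        have hn' : (0:ℝ) < n := by exact_mod_cast hn
        rw [le_div_iff₀ (by positivity)]
        refine le_trans (le_of_eq ?_) (sum_totS (hk n)).2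
        field_simp
      · filter_upwards [eventually_gt_atTop 0] with n hn
        have hn' : (0:ℝ) < n := by exact_mod_cast hn
        rw [div_le_iff₀ (by positivity)]
        refine le_trans (sum_totS (hk n)).1 (le_of_eq ?_)
        field_simp
    refine ⟨fun n => sumG n ⌊β * n⌋₊, ?_, ?_⟩
    · have h1 := hS.div ((tendsto_const_nhds (x := (1:ℝ))).sub hinv) (by norm_num)
      simp only [sub_zero, div_one] at h1
      refine h1.congr' ?_
      filter_upwards [eventually_ge_atTop 2] with n hn
      have h2 : (2:ℝ) ≤ n := by exact_mod_cast hn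
      have h3 : (n:ℝ) ≠ 0 := by positivity
      have h4 : (n:ℝ) - 1 ≠ 0 := by linarith
      simp only [Pi.div_apply]
      rw [totS_density hn]
      field_simp
    · rw [hcube]
      have hU := (hS.pow 2).sub (hS.pow 3)
      have hL := ((hS.pow 2).sub ((hkn.pow 2).mul hS)).sub (hinv.const_mul 2)
      have e : β ^ 2 - β ^ 2 * β - 2 * 0 = β ^ 2 - β ^ 3 := by ring
      rw [e] at hL
      refine tendsto_of_tendsto_of_tendsto_of_le_of_le' hL hU ?_ ?_
      · filter_upwards [eventually_gt_atTop 0] with n hn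
        have hn' : (0:ℝ) < n := by exact_mod_cast hn
        have h1 := le_A (sumG n ⌊β * n⌋₊)
        have h2 := sum_pathP (hk n)
        rw [le_div_iff₀ (by positivity)]
        refine le_trans (le_of_eq ?_) (show totS (sumG n ⌊β * n⌋₊) ^ 2
          - (⌊β * (n:ℝ)⌋₊:ℝ)^2 * totS (sumG n ⌊β * n⌋₊) - 2 * (n:ℝ)^3 ≤ _ by linarith)
        field_simp
      · filter_upwards [eventually_gt_atTop 0] with n hn using A_upper hn _
end

section
/- Let G be a finite simple graph on n vertices that is d-regular (every vertex has degree d). Then A(G) ≥ d²·n·(n−1−d) − n·d². -/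
open Finset SimpleGraph
open scoped Classical

/-- If `G` is a `d`-regular graph on `n` vertices then
`A(G) ≥ d²·n·(n−1−d) − n·d²`. -/
theorem stmt_5 (n d : ℕ) (G : SimpleGraph (Fin n)) (hreg : G.IsRegularOfDegree d) :
    (d : ℝ) ^ 2 * n * ((n : ℝ) - 1 - d) - (n : ℝ) * (d : ℝ) ^ 2 ≤ (A G : ℝ) := by
  let a : Fin n → Fin n → ℝ := fun v w => if G.Adj v w then 1 else 0
  let e : Fin n → Fin n → ℝ := fun v w => if v = w then 1 else 0
  have ha : ∀ v, ∑ w, a v w = d := by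
    intro v
    have h := hreg v
    rw [← G.card_neighborFinset_eq_degree, G.neighborFinset_eq_filter] at h
    simp only [a, Finset.sum_boole]
    exact_mod_cast h
  have hsymm : ∀ v w, a v w = a w v := by
    intro v w
    simp only [a, G.adj_comm]
  have ha' : ∀ v, ∑ w, a w v = d := by
    intro v
    rw [← ha v]
    exact Finset.sum_congr rfl fun w _ => hsymm w v
  have he : ∀ v, ∑ w, e v w = 1 := by
    intro v
    simp [e]
  have h1 : ∑ u, ∑ v, ∑ w, ∑ x, a u v * ((1 - e v w - a v w) * a w x)
      = (d : ℝ) ^ 2 * n * ((n : ℝ) - 1 - d) := by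
    simp only [← Finset.mul_sum, ha, ← Finset.sum_mul, Finset.sum_sub_distrib, he]
    simp
    ring
  have h2 : ∑ u, ∑ v, ∑ w, ∑ x, a u v * (e u x * a w x) = (n : ℝ) * (d : ℝ) ^ 2 := by
    have : ∀ u w, ∑ x, e u x * a w x = a w u := by
      intro u w
      simp [e]
    simp only [← Finset.mul_sum, this, ha', ← Finset.sum_mul, ha]
    simp
    ring
  rw [← h1, ← h2]
  unfold A
  rw [Finset.card_filter]
  push_cast
  simp only [Fintype.sum_prod_type, ← Finset.sum_sub_distrib]
  refine Finset.sum_le_sum fun u _ => Finset.sum_le_sum fun v _ =>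
    Finset.sum_le_sum fun w _ => Finset.sum_le_sum fun x _ => ?_
  simp only [a, e]
  by_cases c1 : G.Adj u v
  swap
  · simp [c1]
  by_cases c2 : G.Adj w x
  swap
  · simp [c2]
  have i1 : u ≠ v := c1.ne
  have i2 : w ≠ x := c2.ne
  by_cases c5 : u = x
  · simp only [c1, c2, c5, if_true]
    split_ifs <;> norm_num
  by_cases c3 : G.Adj v w
  · have i3 : v ≠ w := c3.ne
    simp [c3, i3, c5]
  by_cases c4 : v = w
  · simp [c3, c4, c5]
  have c6 : u ≠ w := by
    rintro rfl
    exact c3 c1.symm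
  have c7 : v ≠ x := by
    rintro rfl
    exact c3 c2.symm
  simp [c1, c2, c3, c4, c5, c6, c7, i1, i2]
end

section
/- Let G be a finite simple graph on n vertices with degree sequence d_1, …, d_n, and suppose its average degree d = (d_1 + ⋯ + d_n)/n satisfies d ≥ n/2. Then ∑_{i=1}^{n} d_i²(n − d_i) ≤ n·d²·(n−d). -/
open Finset SimpleGraph
open scoped Classical

/-- If `G` is a graph on `n` vertices with average degree `d ≥ n/2`, then
`∑_v d_v² (n − d_v) ≤ n d² (n − d)`. -/
theorem stmt_6 (n : ℕ) (G : SimpleGraph (Fin n)) (d : ℝ)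
    (hd : d = (∑ v : Fin n, (G.degree v : ℝ)) / (n : ℝ))
    (hhalf : (n : ℝ) / 2 ≤ d) :
    ∑ v : Fin n, (G.degree v : ℝ) ^ 2 * ((n : ℝ) - G.degree v) ≤
      (n : ℝ) * d ^ 2 * ((n : ℝ) - d) := by
  have key : ∀ v : Fin n, (G.degree v : ℝ) ^ 2 * ((n : ℝ) - G.degree v) ≤
      d ^ 2 * ((n : ℝ) - d) + (2 * n * d - 3 * d ^ 2) * ((G.degree v : ℝ) - d) := by
    intro v
    have hx : (0 : ℝ) ≤ (G.degree v : ℝ) := Nat.cast_nonneg _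
    have h := mul_nonneg (sq_nonneg ((G.degree v : ℝ) - d))
      (by linarith : (0 : ℝ) ≤ (G.degree v : ℝ) + 2 * d - n)
    linarith
  have hsum : ∑ v : Fin n, (G.degree v : ℝ) = n * d := by
    rcases Nat.eq_zero_or_pos n with h0 | hpos
    · subst h0
      simp
    · have hn : (n : ℝ) ≠ 0 := by positivity
      rw [hd]
      field_simp
  refine (Finset.sum_le_sum fun v _ => key v).trans (le_of_eq ?_)
  simp only [Finset.sum_add_distrib, ← Finset.mul_sum, Finset.sum_sub_distrib, hsum]
  simp only [Finset.sum_const, Finset.card_univ, Fintype.card_fin, nsmul_eq_mul]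
  ring
end

section
/- Let 0 < γ < 1 and let f : ℝ → ℝ be convex on the interval [0,γ] and concave on the interval [γ,1]. Let n ≥ 1, let 0 ≤ D ≤ n, and let x_1, …, x_n ∈ [0,1] with x_1 + ⋯ + x_n = D. Then there exist a real number α with γ ≤ α ≤ 1 and y_1, …, y_n ∈ [0,1] with y_1 + ⋯ + y_n = D such that all but at most one of the y_i belong to {0, α} and ∑_{i=1}^n f(x_i) ≤ ∑_{i=1}^n f(y_i). -/
open Finset
open scoped Classical

theorem spread_aux {γ : ℝ} {f : ℝ → ℝ} (hconv : ConvexOn ℝ (Set.Icc (0 : ℝ) γ) f)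
    {a b c d : ℝ} (hc : 0 ≤ c) (hd : d ≤ γ) (hca : c ≤ a) (had : a ≤ d) (hs : a + b = c + d) :
    f a + f b ≤ f c + f d := by
  rcases eq_or_lt_of_le (hca.trans had) with h | h
  · have h1 : a = c := by linarith
    have h2 : b = d := by linarith
    rw [h1, h2]
  · have hp : 0 < d - c := by linarith
    have hcm : c ∈ Set.Icc (0 : ℝ) γ := ⟨hc, by linarith⟩
    have hdm : d ∈ Set.Icc (0 : ℝ) γ := ⟨by linarith, hd⟩
    have h0 : 0 ≤ (d - a) / (d - c) := div_nonneg (by linarith) hp.le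
    have h1 : 0 ≤ (a - c) / (d - c) := div_nonneg (by linarith) hp.le
    have h2 : (d - a) / (d - c) + (a - c) / (d - c) = 1 := by field_simp; ring
    have k1 := hconv.2 hcm hdm h0 h1 h2
    have k2 := hconv.2 hcm hdm h1 h0 (by linarith)
    simp only [smul_eq_mul] at k1 k2
    have e1 : (d - a) / (d - c) * c + (a - c) / (d - c) * d = a := by field_simp; ring
    have e2 : (a - c) / (d - c) * c + (d - a) / (d - c) * d = b := by
      have : b = c + d - a := by linarith
      rw [this]; field_simp; ring
    rw [e1] at k1
    rw [e2] at k2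
    have e3 : (d - a) / (d - c) = 1 - (a - c) / (d - c) := by linarith
    rw [e3] at k1 k2
    nlinarith

theorem spread_pair {γ : ℝ} {f : ℝ → ℝ} (hconv : ConvexOn ℝ (Set.Icc (0 : ℝ) γ) f)
    {a b : ℝ} (ha : 0 < a ∧ a < γ) (hb : 0 < b ∧ b < γ) :
    ∃ c d : ℝ, 0 ≤ c ∧ c ≤ γ ∧ 0 ≤ d ∧ d ≤ γ ∧ c + d = a + b ∧ f a + f b ≤ f c + f d ∧
      (c = 0 ∨ d = γ) := by
  rcases le_total (a + b) γ with h | h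
  · exact ⟨0, a + b, le_rfl, by linarith, by linarith, h, by ring,
      spread_aux hconv le_rfl h (by linarith) (by linarith) (by ring), Or.inl rfl⟩
  · exact ⟨a + b - γ, γ, by linarith, by linarith, by linarith, le_rfl, by ring,
      spread_aux hconv (by linarith) le_rfl (by linarith) (by linarith) (by ring), Or.inr rfl⟩

theorem sum_update_two {n : ℕ} (g : ℝ → ℝ) (x : Fin n → ℝ) {i j : Fin n} (hij : i ≠ j) (c d : ℝ) :
    ∑ k, g (Function.update (Function.update x i c) j d k) + g (x i) + g (x j)
      = ∑ k, g (x k) + g c + g d := by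
  have hj : j ∈ (univ : Finset (Fin n)).erase i := by simp [hij.symm]
  rw [← Finset.add_sum_erase univ _ (mem_univ i), ← Finset.add_sum_erase _ _ hj,
    ← Finset.add_sum_erase univ (fun k => g (x k)) (mem_univ i), ← Finset.add_sum_erase _ _ hj]
  have : ∑ k ∈ (univ.erase i).erase j, g (Function.update (Function.update x i c) j d k)
      = ∑ k ∈ (univ.erase i).erase j, g (x k) := by
    apply Finset.sum_congr rfl
    intro k hk
    simp only [mem_erase, mem_univ, and_true] at hk
    simp [Function.update_of_ne hk.1, Function.update_of_ne hk.2]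
  rw [this]
  simp [Function.update_of_ne hij]
  ring

theorem spread_all {γ : ℝ} (hγ1 : γ < 1) {f : ℝ → ℝ}
    (hconv : ConvexOn ℝ (Set.Icc (0 : ℝ) γ) f) (n m : ℕ) :
    ∀ x : Fin n → ℝ, (∀ i, x i ∈ Set.Icc (0 : ℝ) 1) →
      (univ.filter fun i => 0 < x i ∧ x i < γ).card = m →
      ∃ y : Fin n → ℝ, (∀ i, y i ∈ Set.Icc (0 : ℝ) 1) ∧ ∑ i, y i = ∑ i, x i ∧
        ∑ i, f (x i) ≤ ∑ i, f (y i) ∧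
        (univ.filter fun i => 0 < y i ∧ y i < γ).card ≤ 1 := by
  induction m using Nat.strong_induction_on with
  | _ m ih =>
    intro x hx hm
    by_cases h1 : (univ.filter fun i => 0 < x i ∧ x i < γ).card ≤ 1
    · exact ⟨x, hx, rfl, le_rfl, h1⟩
    obtain ⟨i, hi, j, hj, hij⟩ := Finset.one_lt_card.1 (not_le.1 h1)
    have hi' := (mem_filter.1 hi).2
    have hj' := (mem_filter.1 hj).2
    obtain ⟨c, d, hc0, hcγ, hd0, hdγ, hcd, hf, hor⟩ := spread_pair hconv hi' hj'
    set z := Function.update (Function.update x i c) j d with hz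
    have hzi : z i = c := by simp [hz, Function.update_of_ne hij]
    have hzj : z j = d := by simp [hz]
    have hzk : ∀ k, k ≠ i → k ≠ j → z k = x k := by
      intro k h1 h2
      simp [hz, Function.update_of_ne h1, Function.update_of_ne h2]
    have hzm : ∀ k, z k ∈ Set.Icc (0 : ℝ) 1 := by
      intro k
      by_cases h1 : k = i
      · rw [h1, hzi]; exact ⟨hc0, by linarith⟩
      by_cases h2 : k = j
      · rw [h2, hzj]; exact ⟨hd0, by linarith⟩
      rw [hzk k h1 h2]; exact hx k
    have hlt : (univ.filter fun i => 0 < z i ∧ z i < γ).card < m := by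
      rw [← hm]
      apply Finset.card_lt_card
      rw [Finset.ssubset_iff_of_subset]
      · rcases hor with h | h
        · exact ⟨i, hi, by simp [hzi, h]⟩
        · exact ⟨j, hj, by simp [hzj, h]⟩
      · intro k hk
        by_cases h1 : k = i
        · rw [h1]; exact hi
        by_cases h2 : k = j
        · rw [h2]; exact hj
        have := (mem_filter.1 hk).2
        rw [hzk k h1 h2] at this
        exact mem_filter.2 ⟨mem_univ _, this⟩
    obtain ⟨y, hy, hys, hyf, hyc⟩ := ih _ hlt z hzm rfl
    have s1 := sum_update_two (fun t => t) x hij c d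
    have s2 := sum_update_two f x hij c d
    rw [← hz] at s1 s2
    exact ⟨y, hy, by linarith, by linarith, hyc⟩

/-- **Optimization lemma.**  If `f` is convex on `[0,γ]` and concave on `[γ,1]`, then any
sum `∑ f(x_i)` with `x_i ∈ [0,1]` and `∑ x_i = D` is bounded by `∑ f(y_i)` for some
`y_i ∈ [0,1]` with `∑ y_i = D`, all but at most one of which lie in `{0, α}` for some
`α ∈ [γ, 1]`. -/
theorem stmt_7 (γ : ℝ) (hγ0 : 0 < γ) (hγ1 : γ < 1) (f : ℝ → ℝ)
    (hconv : ConvexOn ℝ (Set.Icc (0 : ℝ) γ) f)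
    (hconc : ConcaveOn ℝ (Set.Icc γ 1) f)
    (n : ℕ) (hn : 1 ≤ n) (D : ℝ) (hD0 : 0 ≤ D) (hDn : D ≤ n)
    (x : Fin n → ℝ) (hx : ∀ i, x i ∈ Set.Icc (0 : ℝ) 1) (hsum : ∑ i, x i = D) :
    ∃ α : ℝ, γ ≤ α ∧ α ≤ 1 ∧
      ∃ y : Fin n → ℝ, (∀ i, y i ∈ Set.Icc (0 : ℝ) 1) ∧ (∑ i, y i = D) ∧
        (∃ i₀ : Fin n, ∀ i, i ≠ i₀ → y i = 0 ∨ y i = α) ∧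
        ∑ i, f (x i) ≤ ∑ i, f (y i) := by
  obtain ⟨z, hz, hzs, hzf, hzc⟩ := spread_all hγ1 hconv n _ x hx rfl
  have hex : ∃ i₀ : Fin n, ∀ i, i ≠ i₀ → ¬ (0 < z i ∧ z i < γ) := by
    rcases Finset.eq_empty_or_nonempty (univ.filter fun i => 0 < z i ∧ z i < γ) with h | ⟨i, hi⟩
    · refine ⟨⟨0, hn⟩, fun i _ hi => ?_⟩
      have : i ∈ (univ.filter fun i => 0 < z i ∧ z i < γ) := mem_filter.2 ⟨mem_univ _, hi⟩
      rw [h] at this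
      simp at this
    · exact ⟨i, fun j hji hj =>
        hji (Finset.card_le_one.1 hzc j (mem_filter.2 ⟨mem_univ _, hj⟩) i hi)⟩
  obtain ⟨i₀, hi₀⟩ := hex
  set S := univ.filter fun i => γ ≤ z i with hS
  rcases Finset.eq_empty_or_nonempty S with hE | hne
  · refine ⟨γ, le_rfl, hγ1.le, z, hz, by rw [hzs, hsum], ⟨i₀, fun i hi => Or.inl ?_⟩, hzf⟩
    have h1 : ¬ γ ≤ z i := by
      intro h
      have : i ∈ S := mem_filter.2 ⟨mem_univ _, h⟩
      rw [hE] at this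
      simp at this
    by_contra h0
    exact hi₀ i hi ⟨lt_of_le_of_ne (hz i).1 (Ne.symm h0), not_le.1 h1⟩
  have hcp : (0 : ℝ) < S.card := by exact_mod_cast hne.card_pos
  have hw : ∑ i ∈ S, (S.card : ℝ)⁻¹ = 1 := by
    rw [Finset.sum_const, nsmul_eq_mul, mul_inv_cancel₀ hcp.ne']
  have hmem : ∀ i ∈ S, z i ∈ Set.Icc γ 1 := fun i hi => ⟨(mem_filter.1 hi).2, (hz i).2⟩
  have hJ := hconc.le_map_sum (t := S) (w := fun _ => (S.card : ℝ)⁻¹) (p := z)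
    (fun _ _ => by positivity) hw hmem
  have hA := (convex_Icc γ 1).sum_mem (t := S) (w := fun _ => (S.card : ℝ)⁻¹) (z := z)
    (fun _ _ => by positivity) hw hmem
  simp only [smul_eq_mul, ← Finset.mul_sum] at hJ hA
  set α := (S.card : ℝ)⁻¹ * ∑ i ∈ S, z i with hα
  have hαs : (S.card : ℝ) * α = ∑ i ∈ S, z i := by
    rw [hα, mul_inv_cancel_left₀ hcp.ne']
  have hJ' : ∑ i ∈ S, f (z i) ≤ (S.card : ℝ) * f α := by
    have := mul_le_mul_of_nonneg_left hJ hcp.le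
    rwa [mul_inv_cancel_left₀ hcp.ne'] at this
  have key : ∀ g : ℝ → ℝ, ∑ i, g (if i ∈ S then α else z i)
      = (S.card : ℝ) * g α + ∑ i ∈ Sᶜ, g (z i) := by
    intro g
    rw [← Finset.sum_add_sum_compl S]
    congr 1
    · rw [Finset.sum_congr rfl (g := fun _ => g α) (fun i hi => by rw [if_pos hi]),
        Finset.sum_const, nsmul_eq_mul]
    · exact Finset.sum_congr rfl (fun i hi => by rw [if_neg (Finset.mem_compl.1 hi)])
  refine ⟨α, hA.1, hA.2, fun i => if i ∈ S then α else z i, ?_, ?_, ⟨i₀, ?_⟩, ?_⟩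
  · intro i
    by_cases h : i ∈ S
    · simp only [h, if_true]; exact ⟨hγ0.le.trans hA.1, hA.2⟩
    · simp only [h, if_false]; exact hz i
  · have := key (fun t => t)
    rw [this, hαs, Finset.sum_add_sum_compl, hzs, hsum]
  · intro i hi
    by_cases h : i ∈ S
    · right; simp only [h, if_true]
    · left
      simp only [h, if_false]
      have h1 : ¬ γ ≤ z i := fun h' => h (mem_filter.2 ⟨mem_univ _, h'⟩)
      by_contra h0
      exact hi₀ i hi ⟨lt_of_le_of_ne (hz i).1 (Ne.symm h0), not_le.1 h1⟩
  · have k1 := key f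
    have k2 := Finset.sum_add_sum_compl S (fun i => f (z i))
    linarith
end

section
/- Let s ≥ 1 be an integer and let G be any finite simple graph on n vertices. Then D_s(G) ≤ ((2s)^{2s} / (2s+1)^{2s+1}) · n^{2s+2}. -/
open Finset SimpleGraph
open scoped Classical

/-- `Dstar s G` is the number of ordered `(2s+2)`-tuples
`(v₁,…,v_s, v, u, u₁,…,u_s)` of pairwise distinct vertices of `G` such that
`v vᵢ` and `u uⱼ` are edges for all `i, j`, and `uv` is not an edge
(labeled copies of the alternating double star `D(s)`). -/
noncomputable def Dstar (s : ℕ) {n : ℕ} (G : SimpleGraph (Fin n)) : ℕ :=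
  Finset.card <|
    (Finset.univ : Finset ((Fin s → Fin n) × Fin n × Fin n × (Fin s → Fin n))).filter
      fun p =>
        (Function.Injective fun i : Fin s ⊕ Fin 2 ⊕ Fin s =>
          Sum.elim p.1
            (Sum.elim (fun j : Fin 2 => if j = 0 then p.2.1 else p.2.2.1) p.2.2.2) i) ∧
        (∀ i, G.Adj p.2.1 (p.1 i)) ∧ (∀ j, G.Adj p.2.2.1 (p.2.2.2 j)) ∧
        ¬ G.Adj p.2.1 p.2.2.1

lemma aux_amgm (m : ℕ) (hm : 1 ≤ m) (x N : ℝ) (hx : 0 ≤ x) (hN : 0 ≤ N) :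
    x ^ m * (N - x) ≤ ((m : ℝ) ^ m / ((m : ℝ) + 1) ^ (m + 1)) * N ^ (m + 1) := by
  have hm' : (0 : ℝ) < m := by exact_mod_cast hm
  rcases hx.eq_or_lt with rfl | hx
  · rw [zero_pow (by omega), zero_mul]; positivity
  have hb := one_add_mul_le_pow (a := (m : ℝ) * N / ((m + 1) * x) - 1)
    (by have : 0 ≤ (m : ℝ) * N / ((m + 1) * x) := by positivity
        linarith) (m + 1)
  rw [add_sub_cancel, div_pow, mul_pow, mul_pow] at hb
  have e : 1 + ((m + 1 : ℕ) : ℝ) * ((m : ℝ) * N / ((m + 1) * x) - 1) = m * (N - x) / x := by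
    push_cast
    field_simp
    ring
  rw [e, le_div_iff₀ (by positivity)] at hb
  rw [div_mul_eq_mul_div, le_div_iff₀ (by positivity)]
  have e2 : (m : ℝ) * (N - x) / x * (((m : ℝ) + 1) ^ (m + 1) * x ^ (m + 1))
      = m * (x ^ m * (N - x) * ((m : ℝ) + 1) ^ (m + 1)) := by
    field_simp
    ring
  rw [e2, pow_succ (m : ℝ) m] at hb
  refine le_of_mul_le_mul_left ?_ hm'
  linarith

lemma aux_count (s : ℕ) (n : ℕ) (G : SimpleGraph (Fin n)) :
    Dstar s G ≤ ∑ q : Fin n × Fin n,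
      if G.Adj q.1 q.2 then 0 else G.degree q.1 ^ s * G.degree q.2 ^ s := by
  unfold Dstar
  rw [Finset.card_eq_sum_card_fiberwise (f := fun p => (p.2.1, p.2.2.1)) (t := Finset.univ)
    (fun _ _ => by simp)]
  refine Finset.sum_le_sum fun q _ => ?_
  split_ifs with h
  · rw [Nat.le_zero, Finset.card_eq_zero, Finset.filter_eq_empty_iff]
    intro p hp hq
    subst hq
    exact (Finset.mem_filter.1 hp).2.2.2.2 h
  · have hc : G.degree q.1 ^ s * G.degree q.2 ^ s =
        ((Fintype.piFinset fun _ : Fin s => G.neighborFinset q.1) ×ˢ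
          (Fintype.piFinset fun _ : Fin s => G.neighborFinset q.2)).card := by
      simp
    rw [hc]
    refine Finset.card_le_card_of_injOn (fun p => (p.1, p.2.2.2)) ?_ ?_
    · intro p hp
      simp only [Finset.coe_filter, Finset.mem_filter, Set.mem_setOf_eq] at hp
      obtain ⟨⟨-, -, h1, h2, -⟩, rfl⟩ := hp
      simp only [Finset.coe_product, Set.mem_prod, Finset.mem_coe, Fintype.mem_piFinset,
        SimpleGraph.mem_neighborFinset]
      exact ⟨h1, h2⟩
    · rintro ⟨a, v, u, b⟩ hp ⟨a', v', u', b'⟩ hp' he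
      simp only [Finset.coe_filter, Finset.mem_filter, Set.mem_setOf_eq] at hp hp'
      have h1 := hp.2.trans hp'.2.symm
      simp only [Prod.mk.injEq] at h1 he ⊢
      exact ⟨he.1, h1.1, h1.2, he.2⟩

lemma aux_row (n : ℕ) (G : SimpleGraph (Fin n)) (v : Fin n) (c : ℝ) :
    (∑ u : Fin n, if G.Adj v u then 0 else c) = c * ((n : ℝ) - G.degree v) := by
  have h : ∀ u, (if G.Adj v u then 0 else c) = c - (if G.Adj v u then c else 0) := by
    intro u; split_ifs <;> simp
  simp_rw [h]
  rw [Finset.sum_sub_distrib, ← Finset.sum_filter, ← SimpleGraph.neighborFinset_eq_filter]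
  simp
  ring

/-- For every integer `s ≥ 1` and every graph `G` on `n` vertices,
`D_s(G) ≤ ((2s)^{2s} / (2s+1)^{2s+1}) n^{2s+2}`. -/
theorem stmt_9 (s : ℕ) (hs : 1 ≤ s) (n : ℕ) (G : SimpleGraph (Fin n)) :
    (Dstar s G : ℝ) ≤
      ((2 * s : ℝ) ^ (2 * s) / (2 * s + 1 : ℝ) ^ (2 * s + 1)) * (n : ℝ) ^ (2 * s + 2) := by
  have h1 : (Dstar s G : ℝ) ≤ ∑ v : Fin n, ∑ u : Fin n,
      if G.Adj v u then (0 : ℝ) else (G.degree v : ℝ) ^ s * (G.degree u : ℝ) ^ s := by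
    have := aux_count s n G
    rw [Fintype.sum_prod_type] at this
    have h : (Dstar s G : ℝ) ≤ _ := Nat.cast_le.2 this
    push_cast at h
    exact h
  have h2 : ∀ v u : Fin n,
      (if G.Adj v u then (0 : ℝ) else (G.degree v : ℝ) ^ s * (G.degree u : ℝ) ^ s) ≤
      (if G.Adj v u then (0 : ℝ) else (G.degree v : ℝ) ^ (2 * s) / 2) +
      (if G.Adj u v then (0 : ℝ) else (G.degree u : ℝ) ^ (2 * s) / 2) := by
    intro v u
    rw [G.adj_comm u v]
    split_ifs
    · simp
    · rw [mul_comm 2 s, pow_mul, pow_mul]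
      nlinarith [sq_nonneg ((G.degree v : ℝ) ^ s - (G.degree u : ℝ) ^ s)]
  have h3 := h1.trans (Finset.sum_le_sum fun v _ => Finset.sum_le_sum fun u _ => h2 v u)
  simp_rw [Finset.sum_add_distrib] at h3
  rw [Finset.sum_comm (f := fun v u : Fin n =>
    if G.Adj u v then (0 : ℝ) else (G.degree u : ℝ) ^ (2 * s) / 2)] at h3
  simp_rw [aux_row] at h3
  rw [← Finset.sum_add_distrib] at h3
  refine h3.trans ?_
  have h4 : ∀ v ∈ (Finset.univ : Finset (Fin n)),
      (G.degree v : ℝ) ^ (2 * s) / 2 * ((n : ℝ) - G.degree v) +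
      (G.degree v : ℝ) ^ (2 * s) / 2 * ((n : ℝ) - G.degree v) ≤
      ((2 * s : ℝ) ^ (2 * s) / (2 * s + 1 : ℝ) ^ (2 * s + 1)) * (n : ℝ) ^ (2 * s + 1) := by
    intro v _
    have := aux_amgm (2 * s) (by omega) (G.degree v) n (by positivity) (by positivity)
    push_cast at this
    linarith
  refine (Finset.sum_le_card_nsmul _ _ _ h4).trans (le_of_eq ?_)
  simp only [Finset.card_univ, Fintype.card_fin, nsmul_eq_mul]
  ring
end

section
/- Let G be a finite simple graph on n ≥ 1 vertices with m edges. Then AC(G) ≤ 4m² − 4m²/n − 8m³/n². -/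
open Finset SimpleGraph
open scoped Classical

/-- `AC G` is the number of ordered quadruples `(u,v,w,x)` of pairwise distinct vertices
with `uv`, `wx` edges and `vw`, `xu` non-edges (labeled alternating 4-cycles). -/
noncomputable def AC {n : ℕ} (G : SimpleGraph (Fin n)) : ℕ :=
  Finset.card <| (Finset.univ : Finset (Fin n × Fin n × Fin n × Fin n)).filter
    fun p =>
      p.1 ≠ p.2.1 ∧ p.1 ≠ p.2.2.1 ∧ p.1 ≠ p.2.2.2 ∧
      p.2.1 ≠ p.2.2.1 ∧ p.2.1 ≠ p.2.2.2 ∧ p.2.2.1 ≠ p.2.2.2 ∧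
      G.Adj p.1 p.2.1 ∧ G.Adj p.2.2.1 p.2.2.2 ∧
      ¬ G.Adj p.2.1 p.2.2.1 ∧ ¬ G.Adj p.2.2.2 p.1

lemma amgm_aux (a b c : ℝ) (ha : 0 < a) (hb : 0 < b) (hc : 0 ≤ c) :
    3 * c ^ 2 ≤ a * b + c ^ 3 * (a⁻¹ + b⁻¹) := by
  obtain ⟨s, hs, rfl⟩ : ∃ s : ℝ, 0 < s ∧ a = s ^ 2 :=
    ⟨√a, Real.sqrt_pos.2 ha, (Real.sq_sqrt ha.le).symm⟩
  obtain ⟨t, ht, rfl⟩ : ∃ t : ℝ, 0 < t ∧ b = t ^ 2 :=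
    ⟨√b, Real.sqrt_pos.2 hb, (Real.sq_sqrt hb.le).symm⟩
  have key : s ^ 2 * t ^ 2 + c ^ 3 * ((s ^ 2)⁻¹ + (t ^ 2)⁻¹) - 3 * c ^ 2
      = c ^ 3 * (s⁻¹ - t⁻¹) ^ 2 + (s * t - c) ^ 2 * (s * t + 2 * c) / (s * t) := by
    field_simp
    ring
  have : 0 ≤ c ^ 3 * (s⁻¹ - t⁻¹) ^ 2 + (s * t - c) ^ 2 * (s * t + 2 * c) / (s * t) := by
    positivity
  linarith

/-- For a graph on `n ≥ 1` vertices with `m` edges,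
`AC(G) ≤ 4m² − 4m²/n − 8m³/n²`. -/
theorem stmt_12 (n : ℕ) (hn : 1 ≤ n) (G : SimpleGraph (Fin n))
    (m : ℕ) (hm : G.edgeFinset.card = m) :
    (AC G : ℝ) ≤ 4 * (m : ℝ) ^ 2 - 4 * (m : ℝ) ^ 2 / (n : ℝ)
      - 8 * (m : ℝ) ^ 3 / (n : ℝ) ^ 2 := by
  obtain ⟨A, hA⟩ : ∃ A : Fin n → Fin n → ℝ, A = fun u v => if G.Adj u v then 1 else 0 :=
    ⟨_, rfl⟩
  obtain ⟨d, hd⟩ : ∃ d : Fin n → ℝ, d = fun u => ∑ v, A u v := ⟨_, rfl⟩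
  have hn0 : (0 : ℝ) < n := by exact_mod_cast hn
  have hsymm : ∀ u v, A u v = A v u := by
    intro u v; simp only [hA, G.adj_comm]
  have hA0 : ∀ u v, 0 ≤ A u v := by
    intro u v; simp only [hA]; split_ifs <;> norm_num
  have hdeg : ∀ u, d u = G.degree u := by
    intro u
    simp only [hd, hA, Finset.sum_boole, ← G.card_neighborFinset_eq_degree,
      G.neighborFinset_eq_filter]
  have hsum : ∑ u, d u = 2 * m := by
    simp only [hdeg]
    rw [← hm]
    exact_mod_cast G.sum_degrees_eq_twice_card_edges
  have hd0 : ∀ u, 0 ≤ d u := by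
    intro u; rw [hdeg]; positivity
  -- first bound
  have h1 : (AC G : ℝ) ≤ ∑ u, ∑ v, ∑ w, ∑ x,
      A v u * A w x * (1 - (if v = w then 1 else 0) - A v w) := by
    unfold AC
    rw [Finset.card_filter]
    push_cast
    simp only [Fintype.sum_prod_type]
    refine sum_le_sum fun u _ => sum_le_sum fun v _ => sum_le_sum fun w _ =>
      sum_le_sum fun x _ => ?_
    simp only [hA]
    have h : v = w → ¬ G.Adj v w := by rintro rfl; exact G.loopless.irrefl _
    have h' := G.adj_comm u v
    by_cases e1 : G.Adj v u <;> by_cases e2 : G.Adj w x <;> by_cases e3 : v = w <;>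
      by_cases e4 : G.Adj v w <;> simp_all
    split_ifs <;> norm_num
  have h2 : ∑ u, ∑ v, ∑ w, ∑ x, A v u * A w x * (1 - (if v = w then 1 else 0) - A v w)
      = (2 * m : ℝ) ^ 2 - ∑ v, d v ^ 2 - ∑ v, ∑ w, A v w * (d v * d w) := by
    rw [Finset.sum_comm]
    have : ∀ v, ∑ u, ∑ w, ∑ x, A v u * A w x * (1 - (if v = w then 1 else 0) - A v w)
        = d v * (2 * m) - d v ^ 2 - ∑ w, A v w * (d v * d w) := by
      intro v
      rw [Finset.sum_comm]
      have : ∀ w, ∑ u, ∑ x, A v u * A w x * (1 - (if v = w then 1 else 0) - A v w)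
          = d v * d w - (if v = w then d v * d w else 0) - A v w * (d v * d w) := by
        intro w
        simp only [← Finset.sum_mul, ← Finset.mul_sum]
        simp only [hd]
        split_ifs <;> ring
      simp only [this, Finset.sum_sub_distrib, ← Finset.mul_sum, hsum]
      simp [sq]
    rw [Finset.sum_congr rfl fun v _ => this v]
    simp only [Finset.sum_sub_distrib, ← Finset.sum_mul, hsum]
    ring
  have h3 : 4 * (m : ℝ) ^ 2 / n ≤ ∑ v, d v ^ 2 := by
    rw [div_le_iff₀ hn0]
    have := sq_sum_le_card_mul_sum_sq (s := univ) (f := d)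
    rw [hsum] at this
    simp at this
    linarith
  have h4 : 8 * (m : ℝ) ^ 3 / (n : ℝ) ^ 2 ≤ ∑ v, ∑ w, A v w * (d v * d w) := by
    obtain ⟨c, hc⟩ : ∃ c : ℝ, c = 2 * m / n := ⟨_, rfl⟩
    have hc0 : 0 ≤ c := by rw [hc]; positivity
    have hp : ∀ v w, A v w * (3 * c ^ 2) ≤
        A v w * (d v * d w) + c ^ 3 * (A v w * (d v)⁻¹ + A w v * (d w)⁻¹) := by
      intro v w
      rw [hsymm w v]
      by_cases e : G.Adj v w
      · have := amgm_aux (d v) (d w) c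
          (by rw [hdeg]; exact_mod_cast (G.degree_pos_iff_exists_adj v).2 ⟨w, e⟩)
          (by rw [hdeg]; exact_mod_cast (G.degree_pos_iff_exists_adj w).2 ⟨v, e.symm⟩) hc0
        have := mul_le_mul_of_nonneg_left this (hA0 v w)
        linarith
      · simp [hA, e]
    have hS := sum_le_sum fun v (_ : v ∈ univ) => sum_le_sum fun w (_ : w ∈ univ) => hp v w
    have hI : ∑ v, ∑ w, A v w * (d v)⁻¹ ≤ n := by
      have : ∀ v, ∑ w, A v w * (d v)⁻¹ ≤ 1 := by
        intro v
        rw [← Finset.sum_mul]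
        have : ∑ w, A v w = d v := by rw [hd]
        rw [this]
        exact mul_inv_le_one
      calc _ ≤ ∑ v : Fin n, (1 : ℝ) := sum_le_sum fun v _ => this v
        _ = n := by simp
    have hI' : ∑ v, ∑ w, A w v * (d w)⁻¹ ≤ n := by
      rw [Finset.sum_comm]; exact hI
    have hN : ∑ v, ∑ w, A v w = 2 * m := by rw [← hsum, hd]
    simp only [Finset.sum_add_distrib, ← Finset.mul_sum, ← Finset.sum_mul, hN] at hS
    simp only [← Finset.sum_mul] at hI hI'
    have := mul_le_mul_of_nonneg_left (add_le_add hI hI') (pow_nonneg hc0 3)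
    have e1 : 2 * m * (3 * c ^ 2) - c ^ 3 * (n + n) = 8 * (m : ℝ) ^ 3 / (n : ℝ) ^ 2 := by
      rw [hc]; field_simp; ring
    linarith
  linarith
end

section
/- Let β ∈ [0,1]. For every sequence (G_n)_{n≥2} of finite simple graphs, where G_n has exactly n vertices and the edge density of G_n tends to β as n → ∞, one has limsup_{n→∞} P(G_n)/n⁵ ≤ max{ β^{3/2} − β², (1−β)^{3/2} − (1−β)² }. Moreover, there exists such a sequence (G_n) with edge density tending to β for which P(G_n)/n⁵ converges to max{ β^{3/2} − β², (1−β)^{3/2} − (1−β)² }. -/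
open Finset SimpleGraph Filter
open scoped Classical

/-- `P G` is the number of ordered quintuples `(v₁,v₂,v₃,v₄,v₅)` of pairwise distinct
vertices with `v₁v₂`, `v₂v₃` edges and `v₃v₄`, `v₄v₅` non-edges (labeled copies
of the path `P_{EENN}`). -/
noncomputable def P {n : ℕ} (G : SimpleGraph (Fin n)) : ℕ :=
  Finset.card <| (Finset.univ : Finset (Fin 5 → Fin n)).filter
    fun v =>
      Function.Injective v ∧
      G.Adj (v 0) (v 1) ∧ G.Adj (v 1) (v 2) ∧
      ¬ G.Adj (v 2) (v 3) ∧ ¬ G.Adj (v 3) (v 4)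

theorem aux_tangent (a t : ℝ) (ha : 0 ≤ a) (ht : 0 ≤ t) :
    3 / 2 * t * a ^ 2 - t ^ 3 / 2 ≤ a ^ 3 := by
  nlinarith [mul_nonneg (sq_nonneg (a - t)) (by positivity : 0 ≤ a + t / 2)]

theorem aux_psi (x b t : ℝ) (hx : 0 ≤ x) (hx1 : x ≤ 1) (hb : 0 ≤ b) (hbx : b ≤ x)
    (hbx2 : x ^ 2 ≤ 2 * b ^ 2) (ht : 0 ≤ t) (ht2 : t ^ 2 = 1 / 2) (hb5 : b ≤ 16 / 25) :
    (1 - x) ^ 3 / 16 ≤ t ^ 3 - b ^ 3 - (1 + x) / 2 * (1 / 2 - b ^ 2) := by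
  have ht1 : 7071 / 10000 ≤ t := by nlinarith
  have ht3 : t ≤ 70711 / 100000 := by nlinarith
  have hc : t ^ 3 = t / 2 := by rw [pow_succ, ht2]; ring
  rw [hc]
  have hx2 : x ≤ 14143 / 10000 * b := by
    by_contra hcon
    push Not at hcon
    nlinarith
  rcases eq_or_lt_of_le hb with hb0 | hb0
  · have : x = 0 := by rw [← hb0] at hx2; linarith
    rw [this, ← hb0]; linarith
  have key : ∀ l r : ℝ, 0 ≤ (r - x) → 0 ≤ x - l → 0 < r - l → 0 ≤ 3 - l - r - x →
      (1 - l) ^ 3 / 16 ≤ t / 2 - b ^ 3 - (1 + l) / 2 * (1 / 2 - b ^ 2) →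
      (1 - r) ^ 3 / 16 ≤ t / 2 - b ^ 3 - (1 + r) / 2 * (1 / 2 - b ^ 2) →
      (1 - x) ^ 3 / 16 ≤ t / 2 - b ^ 3 - (1 + x) / 2 * (1 / 2 - b ^ 2) := by
    intro l r h1 h2 h3 h4 h5 h6
    have e : (r - l) * (t / 2 - b ^ 3 - (1 + x) / 2 * (1 / 2 - b ^ 2) - (1 - x) ^ 3 / 16) =
        (r - x) * (t / 2 - b ^ 3 - (1 + l) / 2 * (1 / 2 - b ^ 2) - (1 - l) ^ 3 / 16) +
        (x - l) * (t / 2 - b ^ 3 - (1 + r) / 2 * (1 / 2 - b ^ 2) - (1 - r) ^ 3 / 16) +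
        1 / 16 * (r - l) * ((x - l) * (r - x)) * (3 - l - r - x) := by ring
    have e0 : 0 ≤ (r - l) * (t / 2 - b ^ 3 - (1 + x) / 2 * (1 / 2 - b ^ 2) - (1 - x) ^ 3 / 16) := by
      rw [e]
      have := mul_nonneg h1 (sub_nonneg.2 h5)
      have := mul_nonneg h2 (sub_nonneg.2 h6)
      have := mul_nonneg (mul_nonneg (by linarith : 0 ≤ 1 / 16 * (r - l)) (mul_nonneg h2 h1)) h4
      linarith
    have := nonneg_of_mul_nonneg_right e0 h3
    linarith
  refine key b (14143 / 10000 * b) (by linarith) (by linarith) (by linarith) (by linarith) ?_ ?_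
  · nlinarith [mul_nonneg hb (sq_nonneg (b - 1 / 4)), mul_nonneg hb (sub_nonneg.2 hb5), sq_nonneg (b - 1 / 4),
      mul_nonneg (mul_nonneg hb hb) (sub_nonneg.2 hb5)]
  · nlinarith [mul_nonneg hb (sq_nonneg (b - 1 / 4)), mul_nonneg hb (sub_nonneg.2 hb5), sq_nonneg (b - 16 / 25),
      mul_nonneg (mul_nonneg hb hb) (sub_nonneg.2 hb5), mul_nonneg (sq_nonneg (b - 2 / 5)) (sub_nonneg.2 hb5)]

theorem aux_L (x y g h a b : ℝ) (hx : 0 ≤ x) (hy : 0 ≤ y) (hxy : x + y = 1)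
    (hg : 0 ≤ g) (hgy : g ≤ y) (hh : 0 ≤ h) (hhy : h ≤ y) (hb : 0 ≤ b) (hbx : b ≤ x)
    (hbx2 : x ^ 2 ≤ 2 * b ^ 2) (ha : 0 ≤ a) (hab : a ^ 2 = b ^ 2 + 2 * (x * g) + y * h) :
    ∃ μ : ℝ, 0 ≤ μ ∧ μ ≤ 2 * y ∧
      x * g * (1 + x - g) + y * h * (1 - h) ≤ a ^ 3 - b ^ 3 + μ * (1 / 2 - a ^ 2) := by
  have hyx : y = 1 - x := by linarith
  have hxg : 0 ≤ x * g := mul_nonneg hx hg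
  have hyh : 0 ≤ y * h := mul_nonneg hy hh
  obtain ⟨t, ht, ht2⟩ : ∃ t : ℝ, 0 ≤ t ∧ t ^ 2 = 1 / 2 :=
    ⟨Real.sqrt (1 / 2), Real.sqrt_nonneg _, Real.sq_sqrt (by norm_num)⟩
  have ht1 : 7071 / 10000 ≤ t := by nlinarith
  have ht3 : t ≤ 70711 / 100000 := by nlinarith
  have hc : t ^ 3 = t / 2 := by rw [pow_succ, ht2]; ring
  have hxg1 : x * g * (1 + x - g) ≤ x * g * (1 + x) :=
    mul_le_mul_of_nonneg_left (by linarith) hxg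
  have hyh1 : y * h * (1 - h) ≤ y * h := by nlinarith [mul_nonneg hyh hh]
  have hxg2 : x * g * (1 + x) ≤ x * g * 2 := mul_le_mul_of_nonneg_left (by linarith) hxg
  by_cases h1 : 2 / 3 ≤ b
  · refine ⟨0, le_refl _, by linarith, ?_⟩
    have := aux_tangent a b ha hb
    have h3 : (2 * (x * g) + y * h) * 1 ≤ (2 * (x * g) + y * h) * (3 / 2 * b) :=
      mul_le_mul_of_nonneg_left (by linarith) (by linarith)
    have h4 : 3 / 2 * b * a ^ 2 - b ^ 3 / 2 - b ^ 3 = (2 * (x * g) + y * h) * (3 / 2 * b) := by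
      rw [hab]; ring
    linarith
  push Not at h1
  have htan := aux_tangent a t ha ht
  by_cases h2 : 16 / 25 ≤ b
  · refine ⟨3 / 2 * t - 1, by linarith, by nlinarith, ?_⟩
    have hconst : 0 ≤ t ^ 3 - b ^ 3 - (1 / 2 - b ^ 2) := by
      rw [hc]; nlinarith [mul_nonneg (sub_nonneg.2 h2) (sub_nonneg.2 h1.le), mul_nonneg hb (mul_nonneg (sub_nonneg.2 h2) (sub_nonneg.2 h1.le))]
    nlinarith
  · push Not at h2
    have hpsi := aux_psi x b t hx (by linarith) hb hbx hbx2 ht ht2 h2.le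
    have hx9 : x ≤ 91 / 100 := by nlinarith
    refine ⟨3 / 2 * t - (1 + x) / 2, by linarith, by linarith, ?_⟩
    have e1 : y * h * (1 - h) ≤ (1 + x) / 2 * (y * h) + (1 - x) ^ 3 / 16 := by
      have : (1 + x) / 2 * (y * h) + (1 - x) ^ 3 / 16 - y * h * (1 - h)
          = y * (h - y / 4) ^ 2 := by rw [hyx]; ring
      nlinarith [mul_nonneg hy (sq_nonneg (h - y / 4))]
    have e2 : (3 / 2 * t - (1 + x) / 2) * (1 / 2 - a ^ 2)
       = 3 / 4 * t - 3 / 2 * t * a ^ 2 - (1 + x) / 2 * (1 / 2) + (1 + x) / 2 * a ^ 2 := by ring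
    have e3 : (1 + x) / 2 * a ^ 2 = (1 + x) / 2 * b ^ 2 + x * g * (1 + x) + (1 + x) / 2 * (y * h) := by
      rw [hab]; ring
    rw [e2, e3]
    rw [hc] at *
    linarith

noncomputable def aind {V : Type*} (R : V → V → Prop) (x y : V) : ℝ := if R x y then 1 else 0
noncomputable def adeg {V : Type*} (s : Finset V) (R : V → V → Prop) (x : V) : ℝ :=
  ∑ y ∈ s, aind R x y
noncomputable def aE {V : Type*} (s : Finset V) (R : V → V → Prop) : ℝ := ∑ x ∈ s, adeg s R x
noncomputable def aS {V : Type*} (s : Finset V) (R : V → V → Prop) : ℝ := ∑ x ∈ s, adeg s R x ^ 2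

theorem aind_nonneg {V : Type*} (R : V → V → Prop) (x y : V) : 0 ≤ aind R x y := by
  unfold aind; split_ifs <;> norm_num
theorem aind_le_one {V : Type*} (R : V → V → Prop) (x y : V) : aind R x y ≤ 1 := by
  unfold aind; split_ifs <;> norm_num
theorem aind_compl {V : Type*} (R : V → V → Prop) (x y : V) :
    aind (fun x y => ¬ R x y) x y = 1 - aind R x y := by
  unfold aind; by_cases h : R x y <;> simp [h]
theorem aind_symm {V : Type*} (R : V → V → Prop) (hR : ∀ x y, R x y → R y x) (x y : V) :
    aind R x y = aind R y x := by
  have : R x y ↔ R y x := ⟨hR x y, hR y x⟩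
  simp only [aind, this]

theorem adeg_nonneg {V : Type*} (s : Finset V) (R : V → V → Prop) (x : V) : 0 ≤ adeg s R x :=
  Finset.sum_nonneg fun _ _ => aind_nonneg _ _ _
theorem adeg_le {V : Type*} (s : Finset V) (R : V → V → Prop) (x : V) : adeg s R x ≤ s.card := by
  calc adeg s R x ≤ ∑ y ∈ s, (1 : ℝ) := Finset.sum_le_sum fun _ _ => aind_le_one _ _ _
    _ = s.card := by simp
theorem aE_nonneg {V : Type*} (s : Finset V) (R : V → V → Prop) : 0 ≤ aE s R :=
  Finset.sum_nonneg fun _ _ => adeg_nonneg _ _ _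
theorem aE_le {V : Type*} (s : Finset V) (R : V → V → Prop) : aE s R ≤ (s.card : ℝ) ^ 2 := by
  calc aE s R ≤ ∑ y ∈ s, (s.card : ℝ) := Finset.sum_le_sum fun _ _ => adeg_le _ _ _
    _ = (s.card : ℝ) ^ 2 := by simp [pow_two]

theorem adeg_compl {V : Type*} (s : Finset V) (R : V → V → Prop) (x : V) :
    adeg s (fun x y => ¬ R x y) x = s.card - adeg s R x := by
  simp [adeg, aind_compl, Finset.sum_sub_distrib]
theorem aE_compl {V : Type*} (s : Finset V) (R : V → V → Prop) :
    aE s (fun x y => ¬ R x y) = (s.card : ℝ) ^ 2 - aE s R := by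
  simp [aE, adeg_compl, Finset.sum_sub_distrib, pow_two]
theorem aS_compl {V : Type*} (s : Finset V) (R : V → V → Prop) :
    aS s (fun x y => ¬ R x y) = (s.card : ℝ) ^ 3 - 2 * s.card * aE s R + aS s R := by
  simp only [aS, adeg_compl, aE]
  rw [Finset.mul_sum]
  have : ∀ x, ((s.card : ℝ) - adeg s R x) ^ 2
    = (s.card : ℝ) ^ 2 - 2 * s.card * adeg s R x + adeg s R x ^ 2 := fun x => by ring
  simp only [this, Finset.sum_add_distrib, Finset.sum_sub_distrib]
  simp; ring

theorem aux_erase {V : Type*} (s : Finset V) (R : V → V → Prop) (hR : ∀ x y, R x y → R y x)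
    (v : V) (hv : v ∈ s) (r : ℝ) (hr : ∀ y ∈ s, y ≠ v → aind R v y = r) :
    aE s R = aE (s.erase v) R + 2 * (s.erase v).card * r + aind R v v ∧
    aS s R = aS (s.erase v) R + 2 * r * aE (s.erase v) R + (s.erase v).card * r ^ 2
      + ((s.erase v).card * r + aind R v v) ^ 2 := by
  have h1 : ∀ x, adeg s R x = adeg (s.erase v) R x + aind R x v := fun x => by
    unfold adeg; rw [Finset.sum_erase_add _ _ hv]
  have h2 : ∀ x ∈ s.erase v, adeg s R x = adeg (s.erase v) R x + r := fun x hx => by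
    rw [h1, aind_symm R hR, hr x (Finset.mem_of_mem_erase hx) (Finset.ne_of_mem_erase hx)]
  have h3 : adeg s R v = (s.erase v).card * r + aind R v v := by
    rw [h1]; congr 1
    unfold adeg
    rw [Finset.sum_congr rfl fun y hy => hr y (Finset.mem_of_mem_erase hy) (Finset.ne_of_mem_erase hy)]
    simp
  constructor
  · have : aE s R = ∑ x ∈ s.erase v, adeg s R x + adeg s R v := (Finset.sum_erase_add _ _ hv).symm
    rw [this, Finset.sum_congr rfl h2, h3, Finset.sum_add_distrib, aE]
    simp only [Finset.sum_const, nsmul_eq_mul]; ring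
  · have : aS s R = ∑ x ∈ s.erase v, adeg s R x ^ 2 + adeg s R v ^ 2 := (Finset.sum_erase_add _ _ hv).symm
    rw [this, Finset.sum_congr rfl fun x hx => by rw [h2 x hx], h3, aS, aE]
    simp only [add_sq, Finset.sum_add_distrib, Finset.sum_const, nsmul_eq_mul, Finset.mul_sum]
    congr 2
    congr 1
    exact Finset.sum_congr rfl fun x _ => by ring

theorem aux_swap {V : Type*} (s : Finset V) (R : V → V → Prop) (hR : ∀ x y, R x y → R y x)
    (hne : s.Nonempty)
    (hmax : ∀ R' : V → V → Prop, (∀ x y, R' x y → R' y x) → aE s R' = aE s R → aS s R' ≤ aS s R) :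
    ∃ v ∈ s, (∀ y ∈ s, y ≠ v → R v y) ∨ (∀ y ∈ s, y ≠ v → ¬ R v y) := by
  obtain ⟨u, hu, humax⟩ := Finset.exists_max_image s (adeg s R) hne
  by_cases hall : ∀ y ∈ s, y ≠ u → R u y
  · exact ⟨u, hu, Or.inl hall⟩
  push Not at hall
  obtain ⟨w, hw, hwu, huw⟩ := hall
  refine ⟨w, hw, Or.inr ?_⟩
  by_contra hcon
  push Not at hcon
  obtain ⟨v, hv, hvw, hwv⟩ := hcon
  have huv : u ≠ v := by rintro rfl; exact huw (hR _ _ hwv)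
  have hvw' := hR _ _ hwv
  have hwu' : ¬ R w u := fun h => huw (hR _ _ h)
  let R' : V → V → Prop := fun x y =>
    ((x = u ∧ y = w) ∨ (x = w ∧ y = u)) ∨ (R x y ∧ ¬ ((x = v ∧ y = w) ∨ (x = w ∧ y = v)))
  have hR' : ∀ x y, R' x y → R' y x := by
    intro x y h
    simp only [R'] at h ⊢
    have := hR x y
    tauto
  have hind : ∀ x y, aind R' x y = aind R x y
      + (if x = u then 1 else 0) * (if y = w then 1 else 0)
      + (if x = w then 1 else 0) * (if y = u then 1 else 0)
      - (if x = v then 1 else 0) * (if y = w then 1 else 0)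
      - (if x = w then 1 else 0) * (if y = v then 1 else 0) := by
    intro x y
    simp only [aind, R']
    by_cases a1 : x = u
    · subst a1
      by_cases b1 : y = w
      · subst b1; simp [huv, huw, hwu.symm]
      · simp [b1, huv, hwu.symm]
    · by_cases a2 : x = v
      · subst a2
        by_cases b1 : y = w
        · subst b1; simp [a1, hvw, hvw']
        · simp [a1, b1, hvw]
      · by_cases a3 : x = w
        · subst a3
          by_cases b1 : y = u
          · subst b1; simp [a1, a2, huv, hwu']
          · by_cases b2 : y = v
            · subst b2; simp [a1, a2, b1, hwv]
            · simp [a1, a2, b1, b2]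
        · simp [a1, a2, a3]
  have hdeg : ∀ x, adeg s R' x = adeg s R x
      + (if x = u then 1 else 0) - (if x = v then 1 else 0) := by
    intro x
    simp only [adeg, hind, Finset.sum_add_distrib, Finset.sum_sub_distrib, ← Finset.mul_sum,
      Finset.sum_ite_eq', hu, hv, hw, if_true]
    ring
  have hE : aE s R' = aE s R := by
    simp only [aE, hdeg, Finset.sum_add_distrib, Finset.sum_sub_distrib, Finset.sum_ite_eq', hu, hv, if_true]
    ring
  have hS : aS s R' = aS s R + 2 * adeg s R u - 2 * adeg s R v + 2 := by
    have e : ∀ x, (adeg s R x + (if x = u then 1 else 0) - (if x = v then 1 else 0)) ^ 2 =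
        adeg s R x ^ 2 + (if x = u then 2 * adeg s R x + 1 else 0)
          + (if x = v then 1 - 2 * adeg s R x else 0) := by
      intro x
      by_cases a1 : x = u
      · subst a1; simp [huv]; ring
      · by_cases a2 : x = v
        · subst a2; simp [a1]; ring
        · simp [a1, a2]
    simp only [aS, hdeg, e, Finset.sum_add_distrib, Finset.sum_ite_eq', hu, hv, if_true]
    ring
  have h1 := hmax R' hR' hE
  have h2 := humax v hv
  linarith

theorem aux_cubes (N a b : ℝ) (ha : 0 ≤ a) (hb : 0 ≤ b) (hba : b ≤ a) (hN : 0 ≤ N)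
    (h : a ^ 2 + b ^ 2 = N ^ 2) : N * (a ^ 2 - b ^ 2) ≤ a ^ 3 - b ^ 3 := by
  have haN : a ≤ N := by nlinarith
  have hbN : b ≤ N := by nlinarith
  have : a ^ 3 - b ^ 3 - N * (a ^ 2 - b ^ 2) = (a - b) * (N ^ 2 + a * b - N * (a + b)) := by
    rw [← h]; ring
  have h2 : N ^ 2 + a * b - N * (a + b) = (N - a) * (N - b) := by ring
  have := mul_nonneg (sub_nonneg.2 hba) (mul_nonneg (sub_nonneg.2 haN) (sub_nonneg.2 hbN))
  rw [← h2] at this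
  linarith

theorem aux_step (m k K : ℝ) (hm : 1 ≤ m) (hk : 0 ≤ k) (hK : 0 ≤ K) (c : ℝ) (hc : c = 0 ∨ c = 1)
    (hkm : k ≤ m) (hmk : m ^ 2 ≤ 2 * k ^ 2) (h : K ^ 2 = k ^ 2 + 2 * m + c) :
    k ^ 3 + 2 * k ^ 2 + m + (m + c) ^ 2 ≤ K ^ 3 := by
  have h0 : 2 * k ^ 2 + m ^ 2 ≤ 3 * m * k := by
    have : m ≤ 2 * k := by nlinarith
    nlinarith [mul_nonneg (sub_nonneg.2 this) (sub_nonneg.2 hkm)]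
  have ht := aux_tangent K (k + 1) hK (by linarith)
  rw [h] at ht
  rcases hc with rfl | rfl <;> nlinarith

theorem aux_AK {V : Type*} [Finite V] : ∀ (n : ℕ) (s : Finset V), s.card = n →
    ∀ R : V → V → Prop, (∀ x y, R x y → R y x) → (n : ℝ) ^ 2 ≤ 2 * aE s R →
    aS s R ≤ Real.sqrt (aE s R) ^ 3 := by
  intro n
  induction n with
  | zero =>
    intro s hs R hR _
    have : s = ∅ := Finset.card_eq_zero.1 hs
    subst this
    simp [aS, aE]
  | succ n ih =>
    intro s hs R hR hn
    have hne : s.Nonempty := by rw [← Finset.card_pos]; omega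
    let T := {R' : V → V → Prop // (∀ x y, R' x y → R' y x) ∧ aE s R' = aE s R}
    have : Nonempty T := ⟨⟨R, hR, rfl⟩⟩
    obtain ⟨⟨R₁, hR₁, hE₁⟩, hmax⟩ := Finite.exists_max (fun R' : T => aS s R'.1)
    have hle : aS s R ≤ aS s R₁ := hmax ⟨R, hR, rfl⟩
    refine hle.trans ?_
    rw [← hE₁] at hn ⊢
    obtain ⟨v, hv, hvv⟩ := aux_swap s R₁ hR₁ hne
      (fun R' h1 h2 => hmax ⟨R', h1, h2.trans hE₁⟩)
    have hcard : (s.erase v).card = n := by rw [Finset.card_erase_of_mem hv, hs]; rfl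
    have hc : aind R₁ v v = 0 ∨ aind R₁ v v = 1 := by
      unfold aind; split_ifs <;> simp
    have hc1 := aind_nonneg R₁ v v
    have hc2 := aind_le_one R₁ v v
    have ihs := ih (s.erase v) hcard
    have hn0 : (0 : ℝ) ≤ n := Nat.cast_nonneg n
    have hn1 : n = 0 ∨ (1 : ℝ) ≤ n := by
      rcases Nat.eq_zero_or_pos n with h | h
      · exact Or.inl h
      · right; exact_mod_cast h
    have cube : ∀ x c : ℝ, 0 ≤ x → c = 0 ∨ c = 1 → Real.sqrt x ^ 3 + c ≤ Real.sqrt (x + c) ^ 3 := by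
      intro x c hx hc
      rcases hc with rfl | rfl
      · simp
      · have e1 := Real.sq_sqrt hx
        have e2 := Real.sq_sqrt (by linarith : 0 ≤ x + 1)
        have e3 := Real.sqrt_nonneg x
        have e4 : Real.sqrt x ≤ Real.sqrt (x + 1) := Real.sqrt_le_sqrt (by linarith)
        have e5 : 1 ≤ Real.sqrt (x + 1) := by rw [Real.one_le_sqrt]; linarith
        have : Real.sqrt (x + 1) ^ 3 = Real.sqrt (x + 1) * (x + 1) := by
          calc Real.sqrt (x + 1) ^ 3 = Real.sqrt (x + 1) * Real.sqrt (x + 1) ^ 2 := by ring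
            _ = _ := by rw [e2]
        have : Real.sqrt x ^ 3 = Real.sqrt x * x := by nth_rw 3 [← e1]; ring
        nlinarith
    have hE0 := aE_nonneg (s.erase v) R₁
    have hE2 := aE_le (s.erase v) R₁
    rw [hcard] at hE2
    push_cast at hn
    rcases hvv with hall | hnone
    · obtain ⟨h1, h2⟩ := aux_erase s R₁ hR₁ v hv 1
        (fun y hy hyv => by simp [aind, hall y hy hyv])
      rw [hcard] at h1 h2
      set e := aE (s.erase v) R₁
      set c := aind R₁ v v
      by_cases hreg : (n : ℝ) ^ 2 ≤ 2 * e
      · have hIH : aS (s.erase v) R₁ ≤ Real.sqrt e ^ 3 := ihs R₁ hR₁ hreg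
        rcases hn1 with hn1 | hn1
        · have he : e = 0 := by subst hn1; simp at hE2; linarith
          have h3 := cube 0 c le_rfl hc
          subst hn1
          simp [he] at hIH h1 h2 h3
          rw [h1, h2]
          have : c ^ 2 = c := by rcases hc with h | h <;> rw [h] <;> norm_num
          linarith
        · have hk := Real.sq_sqrt hE0
          have hK := Real.sq_sqrt (aE_nonneg s R₁)
          have hstep := aux_step n (Real.sqrt e) (Real.sqrt (aE s R₁)) hn1 (Real.sqrt_nonneg _)
            (Real.sqrt_nonneg _) c hc (by rw [Real.sqrt_le_left hn0]; exact hE2) (by rw [hk]; exact hreg)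
            (by rw [hK, hk, h1]; ring)
          rw [hk] at hstep
          rw [h2]
          linarith
      · push Not at hreg
        have := ihs (fun x y => ¬ R₁ x y) (fun x y h h' => h (hR₁ _ _ h'))
          (by rw [aE_compl, hcard]; linarith)
        rw [aE_compl, aS_compl, hcard] at this
        have h3 := cube ((n : ℝ) ^ 2 - e) (1 - c) (by linarith) (by rcases hc with h | h <;> rw [h] <;> norm_num)
        have hb : (n : ℝ) ^ 2 - e + (1 - c) = (n + 1) ^ 2 - aE s R₁ := by rw [h1]; ring
        rw [hb] at h3
        have hEs := aE_le s R₁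
        rw [hs] at hEs
        push_cast at hEs
        have e1 := Real.sq_sqrt (aE_nonneg s R₁)
        have e2 := Real.sq_sqrt (by linarith : 0 ≤ ((n : ℝ) + 1) ^ 2 - aE s R₁)
        have h4 := aux_cubes (n + 1) (Real.sqrt (aE s R₁)) (Real.sqrt (((n : ℝ) + 1) ^ 2 - aE s R₁))
          (Real.sqrt_nonneg _) (Real.sqrt_nonneg _) (Real.sqrt_le_sqrt (by linarith)) (by linarith)
          (by rw [e1, e2]; ring)
        rw [e1, e2] at h4
        have hcc : c ^ 2 = c := by rcases hc with h | h <;> rw [h] <;> norm_num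
        rw [h1] at h4
        rw [← h1] at h4
        rw [h2]
        have h5 : (n + 1 : ℝ) * (aE s R₁ - ((n + 1) ^ 2 - aE s R₁)) =
          2 * (n + 1) * (e + 2 * n * 1 + c) - (n + 1) ^ 3 := by rw [h1]; ring
        rw [h5] at h4
        nlinarith
    · obtain ⟨h1, h2⟩ := aux_erase s R₁ hR₁ v hv 0
        (fun y hy hyv => by simp [aind, hnone y hy hyv])
      rw [hcard] at h1 h2
      set e := aE (s.erase v) R₁
      set c := aind R₁ v v
      have hreg : (n : ℝ) ^ 2 ≤ 2 * e := by
        rcases hn1 with hn1 | hn1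
        · subst hn1; simp; exact hE0
        · rw [h1] at hn; nlinarith
      have := ihs R₁ hR₁ hreg
      have h3 := cube e c hE0 hc
      have hcc : c ^ 2 = c := by rcases hc with h | h <;> rw [h] <;> norm_num
      rw [h2, h1]
      simp only [mul_zero, zero_mul, add_zero, zero_add, zero_pow two_ne_zero]
      rw [hcc]
      linarith

theorem aux_K (x y g h α a Sxx Syp Qx Qy : ℝ) (hx : 0 ≤ x) (hy : 0 ≤ y) (hxy : x + y = 1)
    (hα : 0 ≤ α) (hαx : α ≤ x ^ 2)
    (hg : 0 ≤ g) (hgy : g ≤ y) (hh : 0 ≤ h) (hhy : h ≤ y) (ha : 0 ≤ a) (ha1 : a ≤ 1)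
    (hab : a ^ 2 = α + 2 * (x * g) + y * h) (ha2 : 1 / 2 ≤ a ^ 2)
    (h1 : x ^ 2 ≤ 2 * α → Sxx ≤ √α ^ 3)
    (h2 : 2 * α ≤ x ^ 2 → Sxx ≤ 2 * α * x - x ^ 3 + √(x ^ 2 - α) ^ 3)
    (h3 : Syp ≤ x * (x * g)) (h4 : x * g ^ 2 ≤ Qx) (h5 : y * h ^ 2 ≤ Qy) :
    Sxx + Syp + (x * g + y * h) - Qx - Qy ≤ a ^ 3 := by
  rcases le_total (x ^ 2) (2 * α) with hc | hc
  · have e := Real.sq_sqrt hα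
    obtain ⟨μ, m0, m1, m2⟩ := aux_L x y g h a (√α) hx hy hxy hg hgy hh hhy (Real.sqrt_nonneg _)
      (by rw [Real.sqrt_le_left hx]; exact hαx) (by rw [e]; exact hc) ha (by rw [e]; exact hab)
    have := h1 hc
    nlinarith [mul_nonneg m0 (sub_nonneg.2 ha2)]
  · have hz : 0 ≤ x ^ 2 - α := by linarith
    have e := Real.sq_sqrt hz
    have e1 : 0 ≤ 1 - a ^ 2 := by nlinarith
    have e2 := Real.sq_sqrt e1
    obtain ⟨μ, m0, m1, m2⟩ := aux_L x y (y - g) (y - h) (√(1 - a ^ 2)) (√(x ^ 2 - α)) hx hy hxy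
      (by linarith) (by linarith) (by linarith) (by linarith) (Real.sqrt_nonneg _)
      (by rw [Real.sqrt_le_left hx]; linarith) (by rw [e]; linarith) (Real.sqrt_nonneg _)
      (by rw [e, e2, hab]
          have : (1 : ℝ) = (x + y) ^ 2 := by rw [hxy]; norm_num
          rw [this]; ring)
    have h6 := h2 hc
    have h7 := aux_cubes 1 a (√(1 - a ^ 2)) ha (Real.sqrt_nonneg _)
      (by rw [Real.sqrt_le_left ha]; linarith) zero_le_one (by rw [e2]; ring)
    rw [e2] at h7 m2
    have h8 : μ * (1 / 2 - (1 - a ^ 2)) ≤ 2 * y * (1 / 2 - (1 - a ^ 2)) :=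
      mul_le_mul_of_nonneg_right m1 (by linarith)
    have hy' : y = 1 - x := by linarith
    rw [hab] at h8 m2 h7
    subst hy'
    nlinarith

theorem aux_M (a τ D : ℝ) (ha : 0 ≤ a) (ha1 : a ≤ 1) (ha2 : 1 / 2 ≤ a ^ 2)
    (h1 : D ≤ a ^ 2) (h2 : D ≤ τ) (h3 : 2 * D ≤ τ ^ 2 + a ^ 2) : 2 * D - τ ≤ a * (2 * a - 1) := by
  rcases le_total a τ with h | h
  · nlinarith
  rcases le_total τ (2 * a ^ 2 - a) with h' | h'
  · nlinarith
  · nlinarith [mul_nonneg (sub_nonneg.2 h) (by linarith : 0 ≤ τ + a - 1)]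

section core
variable {V : Type*} [Fintype V]

theorem adeg_split (R : V → V → Prop) (X : Finset V) (x : V) :
    adeg univ R x = adeg X R x + adeg Xᶜ R x := by
  unfold adeg; rw [Finset.sum_add_sum_compl]

theorem cross_symm (R : V → V → Prop) (hR : ∀ x y, R x y → R y x) (X Y : Finset V) (φ ψ : V → ℝ) :
    ∑ x ∈ X, φ x * ∑ y ∈ Y, aind R x y * ψ y = ∑ y ∈ Y, ψ y * ∑ x ∈ X, aind R y x * φ x := by
  simp only [Finset.mul_sum]
  rw [Finset.sum_comm]
  refine Finset.sum_congr rfl fun y _ => Finset.sum_congr rfl fun x _ => ?_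
  rw [aind_symm R hR x y]; ring

theorem cross_deg (R : V → V → Prop) (hR : ∀ x y, R x y → R y x) (X Y : Finset V) :
    ∑ x ∈ X, adeg Y R x = ∑ y ∈ Y, adeg X R y := by
  have := cross_symm R hR X Y (fun _ => 1) (fun _ => 1)
  simpa [adeg] using this

theorem claimK (R : V → V → Prop) (hR : ∀ x y, R x y → R y x) (X : Finset V) (c a : ℝ)
    (hc : 0 ≤ c) (hcN : c * (Fintype.card V : ℝ) = 1)
    (ha : 0 ≤ a) (hE : a ^ 2 = c ^ 2 * aE univ R) (ha2 : 1 / 2 ≤ a ^ 2) (ha1 : a ≤ 1) :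
    c * ∑ v, (c * adeg X R v) ^ 2 + c * ∑ v, c * adeg Xᶜ R v - c * ∑ v, (c * adeg Xᶜ R v) ^ 2
      ≤ a ^ 3 := by
  have hcp : 0 < c := by
    rcases hc.eq_or_lt with h | h
    · rw [← h] at hcN; simp at hcN
    · exact h
  set x : ℝ := c * X.card with hx
  set y : ℝ := c * Xᶜ.card with hy
  have hx0 : 0 ≤ x := by positivity
  have hy0 : 0 ≤ y := by positivity
  have hxy : x + y = 1 := by
    rw [hx, hy, ← hcN, ← mul_add]; congr 1; exact_mod_cast Finset.card_add_card_compl X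
  set γ : ℝ := c ^ 2 * ∑ v ∈ X, adeg Xᶜ R v with hγ
  set η : ℝ := c ^ 2 * ∑ v ∈ Xᶜ, adeg Xᶜ R v with hη
  have hγ' : γ = c ^ 2 * ∑ v ∈ Xᶜ, adeg X R v := by rw [hγ, cross_deg R hR]
  have avg : ∀ (Z : Finset V), ∃ g : ℝ, 0 ≤ g ∧ g ≤ y ∧
      c ^ 2 * ∑ v ∈ Z, adeg Xᶜ R v = (c * Z.card) * g ∧
      (c * Z.card) * g ^ 2 ≤ c * ∑ v ∈ Z, (c * adeg Xᶜ R v) ^ 2 := by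
    intro Z
    rcases Z.eq_empty_or_nonempty with h | h
    · exact ⟨0, le_rfl, hy0, by simp [h], by simp [h]⟩
    have hz : (0 : ℝ) < Z.card := by exact_mod_cast h.card_pos
    have hS0 : 0 ≤ ∑ v ∈ Z, adeg Xᶜ R v := Finset.sum_nonneg fun _ _ => adeg_nonneg _ _ _
    have hS1 : ∑ v ∈ Z, adeg Xᶜ R v ≤ Z.card * Xᶜ.card := by
      calc _ ≤ ∑ v ∈ Z, (Xᶜ.card : ℝ) := Finset.sum_le_sum fun _ _ => adeg_le _ _ _
        _ = _ := by simp
    have hS2 := sq_sum_le_card_mul_sum_sq (s := Z) (f := fun v => adeg Xᶜ R v)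
    set S := ∑ v ∈ Z, adeg Xᶜ R v
    refine ⟨c * (S / Z.card), by positivity, ?_, ?_, ?_⟩
    · rw [hy]; gcongr; rw [div_le_iff₀ hz]; linarith
    · field_simp
    · simp only [mul_pow, ← Finset.mul_sum]
      have : S ^ 2 / Z.card ≤ ∑ i ∈ Z, adeg Xᶜ R i ^ 2 := by rw [div_le_iff₀ hz]; linarith
      calc c * (Z.card : ℝ) * (c ^ 2 * (S / Z.card) ^ 2) = c * (c ^ 2 * (S ^ 2 / Z.card)) := by field_simp
        _ ≤ _ := by gcongr
  obtain ⟨g, g0, g1, g2, g3⟩ := avg X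
  obtain ⟨h, h0, h1, h2, h3⟩ := avg Xᶜ
  have hEsplit : aE univ R = aE X R + ∑ v ∈ X, adeg Xᶜ R v + ∑ v ∈ Xᶜ, adeg X R v
      + ∑ v ∈ Xᶜ, adeg Xᶜ R v := by
    rw [aE, ← Finset.sum_add_sum_compl X]
    simp only [adeg_split R X, Finset.sum_add_distrib, aE]; ring
  have hsp : ∀ F : V → ℝ, ∑ v, F v = ∑ v ∈ X, F v + ∑ v ∈ Xᶜ, F v :=
    fun F => (Finset.sum_add_sum_compl X F).symm
  have key := aux_K x y g h (c ^ 2 * aE X R) a (c * ∑ v ∈ X, (c * adeg X R v) ^ 2)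
    (c * ∑ v ∈ Xᶜ, (c * adeg X R v) ^ 2)
    (c * ∑ v ∈ X, (c * adeg Xᶜ R v) ^ 2) (c * ∑ v ∈ Xᶜ, (c * adeg Xᶜ R v) ^ 2)
    hx0 hy0 hxy (by have := aE_nonneg X R; positivity)
    (by rw [hx, mul_pow]; gcongr; exact aE_le X R) g0 g1 h0 h1 ha ha1
    (by rw [hE, hEsplit, ← g2, ← h2, mul_add, mul_add, mul_add, ← hγ, ← hγ', ← hη]; ring) ha2
    ?_ ?_ ?_ g3 h3
  · rw [hsp, hsp, hsp (fun v => (c * adeg Xᶜ R v) ^ 2)]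
    rw [← g2, ← h2] at key
    simp only [← Finset.mul_sum] at key ⊢
    linarith
  · intro hh
    have := aux_AK _ X rfl R hR (by
      rw [hx, mul_pow] at hh
      have : c ^ 2 * (X.card : ℝ) ^ 2 ≤ c ^ 2 * (2 * aE X R) := by linarith
      exact le_of_mul_le_mul_left this (by positivity))
    rw [Real.sqrt_mul (by positivity), Real.sqrt_sq hc, mul_pow]
    simp only [mul_pow, ← Finset.mul_sum]
    calc c * (c ^ 2 * ∑ i ∈ X, adeg X R i ^ 2) = c ^ 3 * aS X R := by rw [aS]; ring
      _ ≤ _ := by gcongr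
  · intro hh
    have := aux_AK _ X rfl (fun x y => ¬ R x y) (fun x y h h' => h (hR _ _ h')) (by
      rw [hx, mul_pow] at hh
      rw [aE_compl]
      have : c ^ 2 * (2 * aE X R) ≤ c ^ 2 * (X.card : ℝ) ^ 2 := by linarith
      have := le_of_mul_le_mul_left this (by positivity)
      linarith)
    rw [aS_compl, aE_compl] at this
    have e : x ^ 2 - c ^ 2 * aE X R = c ^ 2 * ((X.card : ℝ) ^ 2 - aE X R) := by rw [hx]; ring
    rw [e, Real.sqrt_mul (by positivity), Real.sqrt_sq hc, mul_pow]
    simp only [mul_pow, ← Finset.mul_sum]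
    have h3 := mul_le_mul_of_nonneg_left this (by positivity : 0 ≤ c ^ 3)
    rw [aS] at h3
    rw [hx]
    linarith
  · rw [hx]
    have e1 : ∀ v ∈ Xᶜ, (c * adeg X R v) ^ 2 ≤ x * (c * adeg X R v) := by
      intro v _
      have := adeg_le X R v
      have h0 := adeg_nonneg X R v
      rw [pow_two, hx]; gcongr
    calc c * ∑ v ∈ Xᶜ, (c * adeg X R v) ^ 2 ≤ c * ∑ v ∈ Xᶜ, x * (c * adeg X R v) := by
          gcongr with v hv; exact e1 v hv
      _ = x * γ := by rw [hγ']; simp only [← Finset.mul_sum]; ring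
      _ = _ := by rw [hγ, g2]

theorem boundM (R : V → V → Prop) (hR : ∀ x y, R x y → R y x) (c a : ℝ)
    (hc : 0 ≤ c) 
    (ha : 0 ≤ a) (hE : a ^ 2 = c ^ 2 * aE univ R) (ha2 : 1 / 2 ≤ a ^ 2) (ha1 : a ≤ 1)
    (hcN : c * (Fintype.card V : ℝ) = 1) (x : V) :
    c * ∑ y, aind R x y * (2 * (c * adeg univ R y) - 1) ≤ a * (2 * a - 1) := by
  set T := univ.filter fun y => 0 ≤ 2 * (c * adeg univ R y) - 1 with hT
  have h1 : ∑ y, aind R x y * (2 * (c * adeg univ R y) - 1) ≤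
      ∑ y ∈ T, (2 * (c * adeg univ R y) - 1) := by
    rw [hT, Finset.sum_filter]
    refine Finset.sum_le_sum fun y _ => ?_
    have i0 := aind_nonneg R x y
    have i1 := aind_le_one R x y
    split_ifs with hh
    · nlinarith
    · push Not at hh; nlinarith
  have h2 := mul_le_mul_of_nonneg_left h1 hc
  refine h2.trans ?_
  have h3 := aux_M a (c * T.card) (c * ∑ y ∈ T, c * adeg univ R y) ha ha1 ha2 ?_ ?_ ?_
  · refine le_trans (le_of_eq ?_) h3
    rw [Finset.sum_sub_distrib, ← Finset.mul_sum]
    simp; ring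
  · rw [hE, aE, ← Finset.mul_sum, ← mul_assoc, ← pow_two]
    gcongr
    · exact fun _ _ _ => adeg_nonneg _ _ _
    · exact Finset.subset_univ _
  · gcongr
    calc ∑ y ∈ T, c * adeg univ R y ≤ ∑ y ∈ T, (1 : ℝ) := by
          gcongr with y hy
          rw [← hcN]; gcongr; exact adeg_le univ R y
      _ = _ := by simp
  · have hEsplit : aE univ R = aE T R + ∑ v ∈ T, adeg Tᶜ R v + ∑ v ∈ Tᶜ, adeg T R v
        + ∑ v ∈ Tᶜ, adeg Tᶜ R v := by
      rw [aE, ← Finset.sum_add_sum_compl T]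
      simp only [adeg_split R T, Finset.sum_add_distrib, aE]; ring
    have e1 : ∑ y ∈ T, c * adeg univ R y = c * (aE T R + ∑ v ∈ T, adeg Tᶜ R v) := by
      simp only [adeg_split R T, Finset.sum_add_distrib, aE, ← Finset.mul_sum]
    rw [e1, hE, hEsplit, cross_deg R hR Tᶜ T]
    have e2 := aE_le T R
    have e3 : 0 ≤ ∑ v ∈ Tᶜ, adeg Tᶜ R v := Finset.sum_nonneg fun _ _ => adeg_nonneg _ _ _
    have e4 : 0 ≤ c ^ 2 := by positivity
    nlinarith [mul_nonneg e4 e3, mul_le_mul_of_nonneg_left e2 e4]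

theorem core (R : V → V → Prop) (hR : ∀ x y, R x y → R y x) (c a : ℝ)
    (hc : 0 ≤ c) (hcN : c * (Fintype.card V : ℝ) = 1)
    (ha : 0 ≤ a) (hE : a ^ 2 = c ^ 2 * aE univ R) (ha2 : 1 / 2 ≤ a ^ 2) :
    c * ∑ x, (c * ∑ y, aind R x y * (c * adeg univ R y)) *
      (c * ∑ y, (1 - aind R x y) * (1 - c * adeg univ R y)) ≤ a ^ 3 - a ^ 4 := by
  have ha1 : a ≤ 1 := by
    have h1 := aE_le univ R
    have : a ^ 2 ≤ 1 := by
      rw [hE, ← one_pow 2, ← hcN, mul_pow]; gcongr; simpa using h1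
    nlinarith
  set d : V → ℝ := fun x => c * adeg univ R x with hd
  set z : V → ℝ := fun x => c * ∑ y, aind R x y * (2 * d y - 1) with hz
  have hsumd : c * ∑ x, d x = a ^ 2 := by
    rw [hE, aE, hd, ← Finset.mul_sum]; ring
  have hsumw : ∀ x, c * ∑ y, aind R x y = d x := fun x => by rw [hd]; rfl
  have hone : c * ∑ _y : V, (1 : ℝ) = 1 := by simpa using hcN
  have hf : ∀ x, c * ∑ y, aind R x y * d y = (z x + d x) / 2 := by
    intro x
    have : z x = 2 * (c * ∑ y, aind R x y * d y) - c * ∑ y, aind R x y := by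
      simp only [hz, mul_sub, mul_one, Finset.sum_sub_distrib, Finset.mul_sum]
      congr 1
      exact Finset.sum_congr rfl fun y _ => by ring
    rw [hsumw] at this
    linarith
  have hg : ∀ x, c * ∑ y, (1 - aind R x y) * (1 - d y) = 1 - a ^ 2 - d x + (z x + d x) / 2 := by
    intro x
    rw [← hf, ← hsumd, ← hsumw]
    have : c * ∑ y, (1 - aind R x y) * (1 - d y) = c * ∑ _y : V, (1 : ℝ) - c * ∑ y, d y
        - c * ∑ y, aind R x y + c * ∑ y, aind R x y * d y := by
      rw [← mul_sub, ← mul_sub, ← mul_add, ← Finset.sum_sub_distrib, ← Finset.sum_sub_distrib,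
        ← Finset.sum_add_distrib]
      congr 1
      exact Finset.sum_congr rfl fun y _ => by ring
    rw [this, hone]
  have hd0 : ∀ x, 0 ≤ d x := fun x => mul_nonneg hc (adeg_nonneg _ _ _)
  have hd1 : ∀ x, d x ≤ 1 := fun x => by
    have := adeg_le univ R x
    rw [hd, ← hcN]
    exact mul_le_mul_of_nonneg_left (by simpa using this) hc
  have hf0 : ∀ x, 0 ≤ c * ∑ y, aind R x y * d y := fun x =>
    mul_nonneg hc (Finset.sum_nonneg fun y _ => mul_nonneg (aind_nonneg _ _ _) (hd0 y))
  have hg0 : ∀ x, 0 ≤ c * ∑ y, (1 - aind R x y) * (1 - d y) := fun x =>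
    mul_nonneg hc (Finset.sum_nonneg fun y _ =>
      mul_nonneg (sub_nonneg.2 (aind_le_one _ _ _)) (sub_nonneg.2 (hd1 y)))
  have hzlow : ∀ x, -(1 - a ^ 2) ≤ z x := fun x => by
    have h1 := hf0 x
    have h2 := hg0 x
    rw [hf] at h1
    rw [hg] at h2
    linarith
  have hzup : ∀ x, z x ≤ a * (2 * a - 1) := fun x => boundM R hR c a hc ha hE ha2 ha1 hcN x
  set X := univ.filter fun x => 0 ≤ z x with hX
  have hpt : ∀ x, z x ^ 2 + (2 - 2 * a ^ 2) * z x ≤ (2 - a) * (if x ∈ X then z x else 0) := by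
    intro x
    have h1 := hzlow x
    have h2 := hzup x
    by_cases h : 0 ≤ z x
    · rw [if_pos (by simp [hX, h])]; nlinarith
    · rw [if_neg (by simpa [hX] using h)]; push Not at h; nlinarith
  set s := c * ∑ x, d x ^ 2 with hs
  have hzp : c * ∑ x ∈ X, z x ≤ a ^ 3 - a ^ 2 + s := by
    have hK := claimK R hR X c a hc hcN ha hE ha2 ha1
    have e1 := cross_symm R hR X univ (fun _ => c) (fun y => 2 * d y - 1)
    have e2 : ∑ x ∈ X, z x = ∑ y, (2 * d y - 1) * (c * adeg X R y) := by
      rw [show ∑ x ∈ X, z x = ∑ x ∈ X, c * ∑ y, aind R x y * (2 * d y - 1) from rfl, e1]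
      refine Finset.sum_congr rfl fun y _ => ?_
      rw [adeg, ← Finset.sum_mul, mul_comm c]
    have hdd : ∀ v, d v = c * adeg X R v + c * adeg Xᶜ R v := fun v => by
      rw [hd]; simp only; rw [adeg_split R X]; ring
    have e3 : c * ∑ x, d x = c * ∑ v, c * adeg X R v + c * ∑ v, c * adeg Xᶜ R v := by
      rw [← mul_add, ← Finset.sum_add_distrib]; simp only [hdd]
    have e4 : c * ∑ x ∈ X, z x = s + (c * ∑ v, (c * adeg X R v) ^ 2 - c * ∑ v, c * adeg X R v
       - c * ∑ v, (c * adeg Xᶜ R v) ^ 2) := by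
      rw [e2, hs, ← mul_sub, ← mul_sub, ← mul_add, ← Finset.sum_sub_distrib,
        ← Finset.sum_sub_distrib, ← Finset.sum_add_distrib]
      congr 1
      refine Finset.sum_congr rfl fun y _ => ?_
      rw [hdd]; ring
    rw [hsumd] at e3
    linarith
  have hsa : s ≤ a ^ 3 := by
    have hcp : 0 < c := by
      rcases hc.eq_or_lt with h | h
      · rw [← h] at hcN; simp at hcN
      · exact h
    have := aux_AK _ univ rfl R hR (by
      have : c ^ 2 * ((univ : Finset V).card : ℝ) ^ 2 ≤ c ^ 2 * (2 * aE univ R) := by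
        rw [← mul_pow, Finset.card_univ, hcN]; linarith
      exact le_of_mul_le_mul_left this (by positivity))
    have e : a = c * √(aE univ R) := by
      rw [← Real.sqrt_sq ha, hE, Real.sqrt_mul (by positivity), Real.sqrt_sq hc]
    have e5 : s = c ^ 3 * aS univ R := by
      rw [hs, hd, aS]; simp only [mul_pow, ← Finset.mul_sum]; ring
    rw [e5, e, mul_pow]
    gcongr
  have hfin : ∀ x, (c * ∑ y, aind R x y * d y) * (c * ∑ y, (1 - aind R x y) * (1 - d y)) ≤
      1 / 4 * ((2 - a) * (if x ∈ X then z x else 0) + (2 - 2 * a ^ 2) * d x - d x ^ 2) := by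
    intro x
    rw [hf, hg]
    have := hpt x
    nlinarith
  calc c * ∑ x, (c * ∑ y, aind R x y * d y) * (c * ∑ y, (1 - aind R x y) * (1 - d y))
      ≤ c * ∑ x, 1 / 4 * ((2 - a) * (if x ∈ X then z x else 0) + (2 - 2 * a ^ 2) * d x - d x ^ 2) := by
        exact mul_le_mul_of_nonneg_left (Finset.sum_le_sum fun x _ => hfin x) hc
    _ = 1 / 4 * ((2 - a) * (c * ∑ x ∈ X, z x) + (2 - 2 * a ^ 2) * (c * ∑ x, d x) - s) := by
        rw [← Finset.mul_sum, Finset.sum_sub_distrib, Finset.sum_add_distrib, ← Finset.mul_sum,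
          ← Finset.mul_sum, hs]
        simp only [Finset.sum_ite_mem, Finset.univ_inter]
        ring
    _ ≤ a ^ 3 - a ^ 4 := by
        rw [hsumd]
        nlinarith [mul_le_mul_of_nonneg_left hzp (by linarith : 0 ≤ 2 - a)]

end core

noncomputable def Mf (t : ℝ) : ℝ :=
  max (t ^ ((3 : ℝ) / 2) - t ^ 2) ((1 - t) ^ ((3 : ℝ) / 2) - (1 - t) ^ 2)

theorem Mf_cont : Continuous Mf := by
  unfold Mf
  have h : Continuous fun t : ℝ => t ^ ((3 : ℝ) / 2) := Real.continuous_rpow_const (by norm_num)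
  have h' : Continuous fun t : ℝ => (1 - t) ^ ((3 : ℝ) / 2) := h.comp (continuous_const.sub continuous_id)
  fun_prop

theorem rpow_aux (t : ℝ) (ht : 0 ≤ t) : t ^ ((3 : ℝ) / 2) = √t ^ 3 := by
  rw [Real.sqrt_eq_rpow, ← Real.rpow_natCast, ← Real.rpow_mul ht]; norm_num

theorem core2 {V : Type*} [Fintype V] (R : V → V → Prop) (hR : ∀ x y, R x y → R y x) (c : ℝ)
    (hc : 0 ≤ c) (hcN : c * (Fintype.card V : ℝ) = 1) :
    c * ∑ x, (c * ∑ y, aind R x y * (c * adeg univ R y)) *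
      (c * ∑ y, (1 - aind R x y) * (1 - c * adeg univ R y)) ≤ Mf (c ^ 2 * aE univ R) := by
  have h0 : 0 ≤ c ^ 2 * aE univ R := mul_nonneg (by positivity) (aE_nonneg _ _)
  have h1 : c ^ 2 * aE univ R ≤ 1 := by
    have h1 := aE_le univ R
    rw [← one_pow 2, ← hcN, mul_pow]; gcongr; simpa using h1
  set B := c ^ 2 * aE univ R with hB
  rcases le_total (1 / 2) B with h | h
  · have e := Real.sq_sqrt h0
    have := core R hR c (√B) hc hcN (Real.sqrt_nonneg _) (by rw [e]) (by rw [e]; exact h)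
    refine this.trans (le_trans (le_of_eq ?_) (le_max_left _ _))
    rw [rpow_aux _ h0]
    have e4 : √B ^ 4 = (√B ^ 2) ^ 2 := by ring
    rw [e4, e]
  · have h0' : 0 ≤ 1 - B := by linarith
    have e := Real.sq_sqrt h0'
    have hEc : c ^ 2 * aE univ (fun x y => ¬ R x y) = 1 - B := by
      rw [aE_compl, hB, mul_sub, ← mul_pow, Finset.card_univ, hcN]; norm_num
    have := core (fun x y => ¬ R x y) (fun x y h h' => h (hR _ _ h')) c (√(1 - B)) hc hcN
      (Real.sqrt_nonneg _) (by rw [e, hEc]) (by rw [e]; linarith)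
    refine le_trans (le_of_eq ?_) (this.trans (le_trans (le_of_eq ?_) (le_max_right _ _)))
    · have hd : ∀ y, c * adeg univ (fun x y => ¬ R x y) y = 1 - c * adeg univ R y := fun y => by
        rw [adeg_compl, mul_sub, Finset.card_univ, hcN]
      simp only [hd, aind_compl, sub_sub_cancel]
      congr 1
      exact Finset.sum_congr rfl fun x _ => mul_comm _ _
    · rw [rpow_aux _ h0']
      have e4 : √(1 - B) ^ 4 = (√(1 - B) ^ 2) ^ 2 := by ring
      rw [e4, e]

theorem P_le {n : ℕ} (G : SimpleGraph (Fin n)) :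
    (P G : ℝ) ≤ ∑ x, (∑ y, aind G.Adj x y * adeg univ G.Adj y) *
      (∑ y, (1 - aind G.Adj x y) * (n - adeg univ G.Adj y)) := by
  have h1 : P G ≤ ((univ : Finset (Fin n × (Fin n × Fin n) × (Fin n × Fin n))).filter fun t =>
      (G.Adj t.1 t.2.1.1 ∧ G.Adj t.2.1.1 t.2.1.2) ∧ (¬ G.Adj t.1 t.2.2.1 ∧ ¬ G.Adj t.2.2.1 t.2.2.2)).card := by
    unfold P
    refine Finset.card_le_card_of_injOn (fun v => (v 2, (v 1, v 0), (v 3, v 4))) ?_ ?_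
    · intro v hv
      simp only [Finset.coe_filter, Finset.mem_univ, true_and, Set.mem_ofPred_eq] at hv ⊢
      obtain ⟨_, a, b, c, d⟩ := hv
      exact ⟨⟨b.symm, a.symm⟩, c, d⟩
    · intro v _ w _ h
      simp only [Prod.mk.injEq] at h
      obtain ⟨h2, ⟨h1, h0⟩, h3, h4⟩ := h
      ext i
      fin_cases i <;> simp_all
  have h2 : (P G : ℝ) ≤ _ := Nat.cast_le.2 h1
  refine h2.trans (le_of_eq ?_)
  rw [Finset.card_filter]
  push_cast
  have h3 : ∀ t : Fin n × (Fin n × Fin n) × (Fin n × Fin n),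
    (if (G.Adj t.1 t.2.1.1 ∧ G.Adj t.2.1.1 t.2.1.2) ∧ (¬ G.Adj t.1 t.2.2.1 ∧ ¬ G.Adj t.2.2.1 t.2.2.2)
      then (1 : ℝ) else 0) = (aind G.Adj t.1 t.2.1.1 * aind G.Adj t.2.1.1 t.2.1.2) *
        ((1 - aind G.Adj t.1 t.2.2.1) * (1 - aind G.Adj t.2.2.1 t.2.2.2)) := by
    intro t
    unfold aind
    by_cases a1 : G.Adj t.1 t.2.1.1 <;> by_cases a2 : G.Adj t.2.1.1 t.2.1.2 <;>
    by_cases a3 : G.Adj t.1 t.2.2.1 <;> by_cases a4 : G.Adj t.2.2.1 t.2.2.2 <;> simp [a1, a2, a3, a4]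
  simp only [h3]
  rw [Fintype.sum_prod_type]
  refine Finset.sum_congr rfl fun x _ => ?_
  rw [Fintype.sum_prod_type]
  simp only [← Finset.mul_sum, ← Finset.sum_mul]
  congr 1
  · rw [Fintype.sum_prod_type]
    simp only [← Finset.mul_sum, adeg]
  · rw [Fintype.sum_prod_type]
    simp only [← Finset.mul_sum, adeg]
    simp

theorem P_bound {n : ℕ} (hn : 1 ≤ n) (G : SimpleGraph (Fin n)) :
    (P G : ℝ) / (n : ℝ) ^ 5 ≤ Mf (aE univ G.Adj / (n : ℝ) ^ 2) := by
  have hn0 : (0 : ℝ) < n := by exact_mod_cast hn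
  have := core2 G.Adj (fun x y h => h.symm) (1 / (n : ℝ)) (by positivity)
    (by rw [Fintype.card_fin]; field_simp)
  have e : (1 / (n : ℝ)) ^ 2 * aE univ G.Adj = aE univ G.Adj / (n : ℝ) ^ 2 := by field_simp
  rw [e] at this
  refine le_trans ?_ this
  rw [div_le_iff₀ (by positivity)]
  refine (P_le G).trans (le_of_eq ?_)
  rw [Finset.mul_sum, Finset.sum_mul]
  refine Finset.sum_congr rfl fun x _ => ?_
  have e1 : ∑ y, aind G.Adj x y * (1 / (n : ℝ) * adeg univ G.Adj y) =
      1 / n * ∑ y, aind G.Adj x y * adeg univ G.Adj y := by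
    rw [Finset.mul_sum]; exact Finset.sum_congr rfl fun y _ => by ring
  have e2 : ∑ y, (1 - aind G.Adj x y) * (1 - 1 / (n : ℝ) * adeg univ G.Adj y) =
      1 / n * ∑ y, (1 - aind G.Adj x y) * (n - adeg univ G.Adj y) := by
    rw [Finset.mul_sum]; exact Finset.sum_congr rfl fun y _ => by field_simp
  rw [e1, e2]
  field_simp

theorem aE_edges {n : ℕ} (G : SimpleGraph (Fin n)) : aE univ G.Adj = 2 * (G.edgeFinset.card : ℝ) := by
  have := G.sum_degrees_eq_twice_card_edges
  have h : ∀ x, adeg univ G.Adj x = G.degree x := by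
    intro x
    simp only [adeg, aind]
    rw [← G.card_neighborFinset_eq_degree, SimpleGraph.neighborFinset_eq_filter, Finset.card_filter]
    push_cast; rfl
  simp only [aE, h]
  exact_mod_cast this

theorem density_eq {n : ℕ} (hn : 2 ≤ n) (G : SimpleGraph (Fin n)) :
    density G * (1 - 1 / (n : ℝ)) = aE univ G.Adj / (n : ℝ) ^ 2 := by
  have h2 : (2 : ℝ) ≤ n := by exact_mod_cast hn
  rw [aE_edges, density, Nat.cast_choose_two]
  have : (n : ℝ) - 1 ≠ 0 := by intro h; linarith
  field_simp

theorem ratio_tendsto : Tendsto (fun n : ℕ => 1 - 1 / (n : ℝ)) atTop (nhds 1) := by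
  have := (tendsto_const_nhds (x := (1 : ℝ))).sub tendsto_one_div_atTop_nhds_zero_nat
  simpa using this

theorem aE_tendsto (G : (n : ℕ) → SimpleGraph (Fin n)) (β : ℝ)
    (h : Tendsto (fun n => density (G n)) atTop (nhds β)) :
    Tendsto (fun n : ℕ => aE univ (G n).Adj / (n : ℝ) ^ 2) atTop (nhds β) := by
  have := h.mul ratio_tendsto
  rw [mul_one] at this
  refine this.congr' ?_
  filter_upwards [eventually_ge_atTop 2] with n hn
  exact density_eq hn _

theorem density_tendsto (G : (n : ℕ) → SimpleGraph (Fin n)) (β : ℝ)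
    (h : Tendsto (fun n : ℕ => aE univ (G n).Adj / (n : ℝ) ^ 2) atTop (nhds β)) :
    Tendsto (fun n => density (G n)) atTop (nhds β) := by
  have := h.div ratio_tendsto one_ne_zero
  rw [div_one] at this
  refine this.congr' ?_
  filter_upwards [eventually_ge_atTop 2] with n hn
  have h2 : (2 : ℝ) ≤ n := by exact_mod_cast hn
  simp only [Pi.div_apply]
  rw [← density_eq hn, mul_div_cancel_right₀]
  have : 1 / (n : ℝ) ≤ 1 / 2 := by gcongr
  intro h; linarith

theorem upper (G : (n : ℕ) → SimpleGraph (Fin n)) (β : ℝ)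
    (h : Tendsto (fun n => density (G n)) atTop (nhds β)) :
    Tendsto (fun n : ℕ => Mf (aE univ (G n).Adj / (n : ℝ) ^ 2)) atTop (nhds (Mf β)) :=
  (Mf_cont.tendsto β).comp (aE_tendsto G β h)

theorem upper_limsup (G : (n : ℕ) → SimpleGraph (Fin n)) (β : ℝ)
    (h : Tendsto (fun n => density (G n)) atTop (nhds β)) :
    limsup (fun n => (P (G n) : ℝ) / (n : ℝ) ^ 5) atTop ≤ Mf β := by
  have hu := upper G β h
  rw [← hu.limsup_eq]
  refine limsup_le_limsup ?_ ?_ hu.isBoundedUnder_le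
  · filter_upwards [eventually_ge_atTop 1] with n hn using P_bound hn _
  · exact IsBoundedUnder.isCoboundedUnder_le ⟨0, by
      simp only [ge_iff_le, eventually_map]
      exact Eventually.of_forall fun n => by positivity⟩

def clq (n m : ℕ) : SimpleGraph (Fin n) where
  Adj x y := x ≠ y ∧ x.val < m ∧ y.val < m
  symm := ⟨fun _ _ h => ⟨h.1.symm, h.2.2, h.2.1⟩⟩
  loopless := ⟨fun _ h => h.1 rfl⟩

theorem card_lt {n m : ℕ} (hm : m ≤ n) : ((univ : Finset (Fin n)).filter fun x => x.val < m).card = m := by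
  have h : ((univ : Finset (Fin n)).filter fun x => x.val < m).map Fin.valEmbedding
      = Finset.range m := by
    ext k
    simp only [Finset.mem_map, Finset.mem_filter, Finset.mem_univ, true_and, Fin.valEmbedding_apply,
      Finset.mem_range]
    constructor
    · rintro ⟨x, hx, rfl⟩; exact hx
    · intro hk; exact ⟨⟨k, by omega⟩, hk, rfl⟩
  rw [← Finset.card_map Fin.valEmbedding, h, Finset.card_range]

theorem aE_clq {n m : ℕ} (hm : m ≤ n) : aE univ (clq n m).Adj = (m : ℝ) ^ 2 - m := by
  have h : ∀ x y, aind (clq n m).Adj x y = (if x.val < m then 1 else 0) * (if y.val < m then 1 else 0)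
      - (if x = y then (if x.val < m then 1 else 0) else 0) := by
    intro x y
    simp only [aind, clq]
    by_cases a : x = y
    · subst a; by_cases b : x.val < m <;> simp [b]
    · by_cases b : x.val < m <;> by_cases c : y.val < m <;> simp [a, b, c]
  have hs : ∑ x : Fin n, (if x.val < m then (1 : ℝ) else 0) = m := by
    rw [Finset.sum_boole, card_lt hm]
  simp only [aE, adeg, h, Finset.sum_sub_distrib, ← Finset.mul_sum, ← Finset.sum_mul, hs,
    Finset.sum_ite_eq, Finset.mem_univ, if_true]
  ring

theorem P_clq {n m : ℕ} (hm : m ≤ n) :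
    (m : ℝ) ^ 3 * (n - m) * n - 25 * (n : ℝ) ^ 4 ≤ P (clq n m) := by
  set A := (univ : Finset (Fin n)).filter fun x => x.val < m with hA
  have hAc : A.card = m := card_lt hm
  set F : Fin 5 → Finset (Fin n) := ![A, A, A, Aᶜ, univ] with hF
  have h1 : (Fintype.piFinset F).card = m * m * m * (n - m) * n := by
    rw [Fintype.card_piFinset, Fin.prod_univ_five]
    simp [hF, hAc, Finset.card_compl]
  set Q := (univ : Finset (Fin 5 × Fin 5)).filter fun p => p.1 ≠ p.2
  have h2 : ∀ p ∈ Q, ((univ : Finset (Fin 5 → Fin n)).filter fun v => v p.1 = v p.2).card ≤ n ^ 4 := by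
    rintro ⟨i, j⟩ hp
    have hij : i ≠ j := by simpa [Q] using hp
    have : Fintype.card ({k : Fin 5 // k ≠ j} → Fin n) = n ^ 4 := by
      rw [Fintype.card_fun, Fintype.card_fin]; congr 1; simp
    rw [← this, ← Finset.card_univ]
    refine Finset.card_le_card_of_injOn (fun v k => v k.1) (fun _ _ => by simp) ?_
    intro v hv w hw h
    simp at hv hw
    have h' : ∀ k, k ≠ j → v k = w k := fun k hk => congrFun h ⟨k, hk⟩
    funext k
    by_cases hk : k = j
    · subst hk; rw [← hv, ← hw]; exact h' _ hij
    · exact h' k hk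
  have hQ : Q.card ≤ 25 := (Finset.card_le_univ _).trans (by simp)
  have h3 : Fintype.piFinset F ⊆ ((univ : Finset (Fin 5 → Fin n)).filter fun v =>
      Function.Injective v ∧ (clq n m).Adj (v 0) (v 1) ∧ (clq n m).Adj (v 1) (v 2) ∧
      ¬ (clq n m).Adj (v 2) (v 3) ∧ ¬ (clq n m).Adj (v 3) (v 4)) ∪
      Q.biUnion fun p => (univ : Finset (Fin 5 → Fin n)).filter fun v => v p.1 = v p.2 := by
    intro v hv
    rw [Fintype.mem_piFinset] at hv
    have v0 := hv 0
    have v1 := hv 1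
    have v2 := hv 2
    have v3 := hv 3
    simp [hF, hA] at v0 v1 v2 v3
    rw [Finset.mem_union]
    by_cases hi : Function.Injective v
    · left
      refine Finset.mem_filter.2 ⟨Finset.mem_univ _, hi, ⟨hi.ne (by decide), v0, v1⟩, ⟨hi.ne (by decide), v1, v2⟩, ?_, ?_⟩
      · rintro ⟨_, _, h⟩; omega
      · rintro ⟨_, h, _⟩; omega
    · right
      simp only [Function.Injective] at hi
      push Not at hi
      obtain ⟨i, j, h, hne⟩ := hi
      rw [Finset.mem_biUnion]
      exact ⟨(i, j), by simp [Q, hne], by simp [h]⟩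
  have h4 := (Finset.card_le_card h3).trans (Finset.card_union_le _ _)
  have h5 := Finset.card_biUnion_le_card_mul Q _ _ h2
  have h6 : m * m * m * (n - m) * n ≤ P (clq n m) + 25 * n ^ 4 := by
    rw [← h1]
    refine h4.trans (Nat.add_le_add le_rfl (h5.trans (Nat.mul_le_mul_right _ hQ)))
  have h7 : ((m * m * m * (n - m) * n : ℕ) : ℝ) ≤ ((P (clq n m) + 25 * n ^ 4 : ℕ) : ℝ) := Nat.cast_le.2 h6
  push_cast [Nat.cast_sub hm] at h7
  linarith

theorem P_compl {n : ℕ} (G : SimpleGraph (Fin n)) : P G ≤ P Gᶜ := by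
  unfold P
  refine Finset.card_le_card_of_injOn (fun v => v ∘ Fin.rev) ?_ ?_
  · intro v hv
    simp only [Finset.coe_filter, Finset.mem_univ, true_and, Set.mem_ofPred_eq] at hv ⊢
    obtain ⟨hi, a, b, c, d⟩ := hv
    have r0 : Fin.rev (0 : Fin 5) = 4 := rfl
    have r1 : Fin.rev (1 : Fin 5) = 3 := rfl
    have r2 : Fin.rev (2 : Fin 5) = 2 := rfl
    have r3 : Fin.rev (3 : Fin 5) = 1 := rfl
    have r4 : Fin.rev (4 : Fin 5) = 0 := rfl
    simp only [Function.comp, r0, r1, r2, r3, r4, SimpleGraph.compl_adj]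
    refine ⟨hi.comp Fin.rev_injective, ⟨hi.ne (by decide), fun h => d h.symm⟩,
      ⟨hi.ne (by decide), fun h => c h.symm⟩, fun h => h.2 b.symm, fun h => h.2 a.symm⟩
  · intro v _ w _ h
    funext k
    have := congrFun h (Fin.rev k)
    simpa using this

theorem aE_Gcompl {n : ℕ} (G : SimpleGraph (Fin n)) :
    aE univ Gᶜ.Adj = (n : ℝ) ^ 2 - n - aE univ G.Adj := by
  have h : ∀ x y, aind Gᶜ.Adj x y = 1 - (if x = y then 1 else 0) - aind G.Adj x y := by
    intro x y
    simp only [aind, SimpleGraph.compl_adj]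
    by_cases a : x = y
    · subst a; simp
    · by_cases b : G.Adj x y <;> simp [a, b]
  simp only [aE, adeg, h, Finset.sum_sub_distrib, Finset.sum_ite_eq, Finset.mem_univ, if_true]
  simp; ring

theorem clq_seq (t : ℝ) (h0 : 0 ≤ t) (h1 : t ≤ 1) : ∃ G : (n : ℕ) → SimpleGraph (Fin n),
    Tendsto (fun n : ℕ => aE univ (G n).Adj / (n : ℝ) ^ 2) atTop (nhds t) ∧
    ∃ l : ℕ → ℝ, (∀ᶠ n : ℕ in atTop, l n ≤ (P (G n) : ℝ) / (n : ℝ) ^ 5) ∧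
      Tendsto l atTop (nhds (t ^ ((3 : ℝ) / 2) - t ^ 2)) := by
  set s := √t with hs
  have s0 : 0 ≤ s := Real.sqrt_nonneg _
  have s1 : s ≤ 1 := by rw [hs, Real.sqrt_le_one]; exact h1
  have hst : s ^ 2 = t := Real.sq_sqrt h0
  have hm : ∀ n : ℕ, ⌊s * n⌋₊ ≤ n := fun n => by
    have : ⌊s * n⌋₊ ≤ ⌊(n : ℝ)⌋₊ := Nat.floor_le_floor (by nlinarith [Nat.cast_nonneg (α := ℝ) n])
    simpa using this
  have hr : Tendsto (fun n : ℕ => (⌊s * n⌋₊ : ℝ) / n) atTop (nhds s) :=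
    (tendsto_nat_floor_mul_div_atTop s0).comp tendsto_natCast_atTop_atTop
  have hi : Tendsto (fun n : ℕ => 1 / (n : ℝ)) atTop (nhds 0) := tendsto_one_div_atTop_nhds_zero_nat
  refine ⟨fun n => clq n ⌊s * n⌋₊, ?_, fun n => ((⌊s * n⌋₊ : ℝ) / n) ^ 3 * (1 - (⌊s * n⌋₊ : ℝ) / n)
    - 25 * (1 / (n : ℝ)), ?_, ?_⟩
  · have := (hr.pow 2).sub (hr.mul hi)
    rw [hst, mul_zero, sub_zero] at this
    refine this.congr' ?_
    filter_upwards [eventually_ge_atTop 1] with n hn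
    have hn0 : (n : ℝ) ≠ 0 := by positivity
    rw [aE_clq (hm n)]
    field_simp
  · filter_upwards [eventually_ge_atTop 1] with n hn
    have hn0 : (0 : ℝ) < n := by positivity
    rw [le_div_iff₀ (by positivity)]
    refine le_trans (le_of_eq ?_) (P_clq (hm n))
    field_simp
  · have := ((hr.pow 3).mul (hr.const_sub 1)).sub (hi.const_mul 25)
    convert this using 2
    rw [rpow_aux t h0, ← hs, ← hst]; ring

theorem finish (G : (n : ℕ) → SimpleGraph (Fin n)) (β : ℝ)
    (h : Tendsto (fun n : ℕ => aE univ (G n).Adj / (n : ℝ) ^ 2) atTop (nhds β))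
    (l : ℕ → ℝ) (hl : ∀ᶠ n : ℕ in atTop, l n ≤ (P (G n) : ℝ) / (n : ℝ) ^ 5)
    (hl' : Tendsto l atTop (nhds (Mf β))) :
    Tendsto (fun n => density (G n)) atTop (nhds β) ∧
      Tendsto (fun n => (P (G n) : ℝ) / (n : ℝ) ^ 5) atTop (nhds (Mf β)) := by
  have hd := density_tendsto G β h
  refine ⟨hd, tendsto_of_tendsto_of_tendsto_of_le_of_le' hl' (upper G β hd) hl ?_⟩
  filter_upwards [eventually_ge_atTop 1] with n hn using P_bound hn _

theorem stmt_15 (β : ℝ) (hβ0 : 0 ≤ β) (hβ1 : β ≤ 1) :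
    (∀ G : (n : ℕ) → SimpleGraph (Fin n),
      Tendsto (fun n => density (G n)) atTop (nhds β) →
      limsup (fun n => (P (G n) : ℝ) / (n : ℝ) ^ 5) atTop ≤
        max (β ^ ((3 : ℝ) / 2) - β ^ 2) ((1 - β) ^ ((3 : ℝ) / 2) - (1 - β) ^ 2)) ∧
    (∃ G : (n : ℕ) → SimpleGraph (Fin n),
      Tendsto (fun n => density (G n)) atTop (nhds β) ∧
      Tendsto (fun n => (P (G n) : ℝ) / (n : ℝ) ^ 5) atTop
        (nhds (max (β ^ ((3 : ℝ) / 2) - β ^ 2)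
          ((1 - β) ^ ((3 : ℝ) / 2) - (1 - β) ^ 2)))) := by
  refine ⟨fun G h => upper_limsup G β h, ?_⟩
  rcases le_total ((1 - β) ^ ((3 : ℝ) / 2) - (1 - β) ^ 2) (β ^ ((3 : ℝ) / 2) - β ^ 2) with hc | hc
  · obtain ⟨G, h, l, hl, hl'⟩ := clq_seq β hβ0 hβ1
    exact ⟨G, finish G β h l hl (by rw [Mf, max_eq_left hc]; exact hl')⟩
  · obtain ⟨G, h, l, hl, hl'⟩ := clq_seq (1 - β) (by linarith) (by linarith)
    refine ⟨fun n => (G n)ᶜ, finish _ β ?_ l ?_ (by rw [Mf, max_eq_right hc]; exact hl')⟩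
    · have := ratio_tendsto.sub h
      rw [sub_sub_cancel] at this
      refine this.congr' ?_
      filter_upwards [eventually_ge_atTop 1] with n hn
      have hn0 : (n : ℝ) ≠ 0 := by positivity
      rw [aE_Gcompl]
      field_simp
    · filter_upwards [hl] with n hn
      refine hn.trans ?_
      have : (P (G n) : ℝ) ≤ P (G n)ᶜ := by exact_mod_cast P_compl (G n)
      gcongr
end

section
/- Let G be a finite simple graph on n vertices whose average degree d = 2m/n (where m is the number of edges) satisfies d ≥ n/2. Then S(G) ≤ n·d²·(n−d). -/
open Finset SimpleGraph
open scoped Classical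

/-- `S G` is the number of ordered quadruples `(v,a,b,c)` of pairwise distinct vertices
with `va`, `vb` edges and `vc` a non-edge (labeled copies of the star `S_{2,1}`). -/
noncomputable def S {n : ℕ} (G : SimpleGraph (Fin n)) : ℕ :=
  Finset.card <| (Finset.univ : Finset (Fin n × Fin n × Fin n × Fin n)).filter
    fun p =>
      p.1 ≠ p.2.1 ∧ p.1 ≠ p.2.2.1 ∧ p.1 ≠ p.2.2.2 ∧
      p.2.1 ≠ p.2.2.1 ∧ p.2.1 ≠ p.2.2.2 ∧ p.2.2.1 ≠ p.2.2.2 ∧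
      G.Adj p.1 p.2.1 ∧ G.Adj p.1 p.2.2.1 ∧ ¬ G.Adj p.1 p.2.2.2

theorem S_le_sum {n : ℕ} (G : SimpleGraph (Fin n)) :
    S G ≤ ∑ v, G.degree v * (G.degree v * (n - G.degree v)) := by
  have h : ∀ v, G.degree v * (G.degree v * (n - G.degree v)) =
      (G.neighborFinset v ×ˢ (G.neighborFinset v ×ˢ (G.neighborFinset v)ᶜ)).card := by
    intro v
    simp [Finset.card_product, Finset.card_compl]
  simp_rw [h]
  rw [← Finset.card_sigma]
  unfold S
  refine Finset.card_le_card_of_injOn (fun p => ⟨p.1, p.2⟩) ?_ ?_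
  · rintro ⟨v, a, b, c⟩ hp
    simp at hp ⊢
    tauto
  · rintro ⟨v, a⟩ _ ⟨w, b⟩ _ hh
    simpa using hh

/-- If `G` is a graph on `n` vertices with average degree `d = 2m/n ≥ n/2`, then
`S(G) ≤ n d² (n − d)`. -/
theorem stmt_18 (n : ℕ) (G : SimpleGraph (Fin n)) (d : ℝ)
    (hd : d = 2 * (G.edgeFinset.card : ℝ) / (n : ℝ))
    (hhalf : (n : ℝ) / 2 ≤ d) :
    (S G : ℝ) ≤ (n : ℝ) * d ^ 2 * ((n : ℝ) - d) := by
  have h1 : (S G : ℝ) ≤ ∑ v, (G.degree v : ℝ) * (G.degree v * (n - G.degree v)) := by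
    have h := S_le_sum G
    have h' : (S G : ℝ) ≤
        ((∑ v, G.degree v * (G.degree v * (n - G.degree v)) : ℕ) : ℝ) := by
      exact_mod_cast h
    refine h'.trans (le_of_eq ?_)
    rw [Nat.cast_sum]
    refine Finset.sum_congr rfl fun v _ => ?_
    have hv : G.degree v ≤ n := by
      have := (G.degree_lt_card_verts v).le
      simpa using this
    rw [Nat.cast_mul, Nat.cast_mul, Nat.cast_sub hv]
  have hs : ∑ v, (G.degree v : ℝ) = n * d := by
    have h := G.sum_degrees_eq_twice_card_edges
    have h' : (∑ v, (G.degree v : ℝ)) = 2 * (G.edgeFinset.card : ℝ) := by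
      exact_mod_cast h
    rw [h', hd]
    rcases Nat.eq_zero_or_pos n with h0 | h0
    · subst h0
      rw [← h']
      simp
    · have : (n : ℝ) ≠ 0 := by positivity
      field_simp
  refine h1.trans ?_
  have h2 : ∑ v, (G.degree v : ℝ) * (G.degree v * (n - G.degree v)) ≤
      ∑ v, (d ^ 2 * (n - d) - (2 * d * n - 3 * d ^ 2) * d
        + (2 * d * n - 3 * d ^ 2) * (G.degree v : ℝ)) := by
    refine Finset.sum_le_sum fun v _ => ?_
    have hk : (0 : ℝ) ≤ G.degree v := by positivity
    have := mul_nonneg (sq_nonneg ((G.degree v : ℝ) - d))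
      (by linarith : (0 : ℝ) ≤ (G.degree v : ℝ) + 2 * d - n)
    nlinarith [this]
  refine h2.trans (le_of_eq ?_)
  rw [Finset.sum_add_distrib, ← Finset.mul_sum, hs]
  simp
  ring
end
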